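/- Let a₀, …, a₁₁ ∈ ℂ³ be nonzero, pairwise linearly independent vectors defining a central arrangement of 12 planes in ℂ³ (equivalently, 12 lines in the complex projective plane) with Milnor fiber F = {z ∈ ℂ³ : ∏_{i<12} ℓᵢ(z) = 1} and basepoint z₀ ∈ F. Suppose there exists j₃ < 12 such that every nonzero v ∈ ℂ³ with ℓ_{j₃}(v) = 0 has m_v ≤ 3, and some nonzero v ∈ ℂ³ with ℓ_{j₃}(v) = 0 has m_v = 3 (the line ker ℓ_{j₃} contains multiple points of multiplicity 2 and 3 only, with at least one of multiplicity 3). Suppose also there exists j₄ < 12 such that every nonzero v ∈ ℂ³ with ℓ_{j₄}(v) = 0 has m_v ∈ {1, 2, 4}, and some nonzero v ∈ ℂ³ with ℓ_{j₄}(v) = 0 has m_v = 4 (the line ker ℓ_{j₄} contains multiple points of multiplicity 2 and 4 only, with at least one of multiplicity 4). Then dim_ℂ (ℂ ⊗_ℤ Ab π₁(F, z₀)) = 11, i.e. the first Betti number of F with complex coefficients equals 11. -/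

import Mathlib

open scoped TensorProduct

/-!
The group of `n`-th roots of unity acts on the Milnor fibre `F` of `n` lines by multiplication, and
a cohomology class of `F` is a sum of eigenclasses for the characters `c ↦ c ^ k`. Put one line
`ℓ j` at infinity and let `U ⊆ ℂ²` be the complement of the other lines in the resulting affine
chart. Since `F → U` is the cyclic covering which extracts an `n`-th root of the product of the
linear forms, an eigenclass for `k` is a class of `U` with coefficients in the rank one local system
of that product raised to the power `k / n`. Such a class is encoded as a local system of affine
maps of `ℂ` on `U`, and it vanishes once this system has a flat section.

By a Zariski–Lefschetz argument, it is enough to find a flat section over one generic vertical line.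
Far out, the lines form clusters there, one for each multiple point at infinity. A loop around a
point of multiplicity `m ≥ 3` commutes with the loop about vertical infinity; their linear parts are
`exp (-2 π i k m / n)` and `exp (-2 π i k / n)`. If `n` divides neither `k` nor any of the `k m`,
these loops have unique fixed points, which glue to a flat section. Hence all eigenclasses with
nontrivial character vanish as soon as, for each `k`, a suitable line can be chosen as `ℓ j`.

The invariant classes are determined by their periods on meridians of the `n - 1` affine lines.
Loops in `F` around single lines, on which the logarithms of the linear forms have an invertible
matrix of periods, show that the dimension is not smaller.
-/

namespace Milnor

open Set Topology
open scoped unitInterval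

/-! ### Holonomy along curves -/

/-- Concatenation of curves, at double speed. -/
noncomputable def concat {E : Type*} (γ δ : ℝ → E) : ℝ → E :=
  fun t => if t ≤ 1 / 2 then γ (2 * t) else δ (2 * t - 1)

@[simp] theorem concat_zero {E : Type*} (γ δ : ℝ → E) : concat γ δ 0 = γ 0 := by simp [concat]

@[simp] theorem concat_one {E : Type*} (γ δ : ℝ → E) : concat γ δ 1 = δ 1 := by norm_num [concat]

theorem comp_concat {E F : Type*} (f : E → F) (γ δ : ℝ → E) :
    (fun t => f (concat γ δ t)) = concat (fun t => f (γ t)) (fun t => f (δ t)) :=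
  funext fun _ => apply_ite f _ _ _

section Transport

variable {E E' : Type*} [TopologicalSpace E] [TopologicalSpace E'] {X Y : Set E}
  {G : Type*} [Group G]

/-- The restriction of `γ` to the unit interval is a path in `X`. Curves are total functions on `ℝ`,
so that they can be reparametrised by arithmetic; their values outside `I` are irrelevant. -/
def Curve (X : Set E) (γ : ℝ → E) : Prop :=
  Continuous γ ∧ ∀ t ∈ I, γ t ∈ X

/-- A homomorphism from the fundamental groupoid of `X` to `G`, as a function on curves. Homotopy
invariance and multiplicativity are both encoded in `hol_square`: the two ways around a square in
`X` have the same holonomy. -/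
structure Transport (X : Set E) (G : Type*) [Group G] where
  /-- The value on a curve; it is meaningless unless `Curve X γ`. -/
  hol : (ℝ → E) → G
  hol_const : ∀ x ∈ X, hol (fun _ => x) = 1
  hol_square : ∀ S : ℝ → ℝ → E, Continuous (fun p : ℝ × ℝ => S p.1 p.2) →
    (∀ s ∈ I, ∀ t ∈ I, S s t ∈ X) →
    hol (fun s => S s 0) * hol (fun t => S 1 t) = hol (fun t => S 0 t) * hol (fun s => S s 1)

theorem Curve.mono {γ : ℝ → E} (hγ : Curve X γ) (hXY : X ⊆ Y) : Curve Y γ :=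
  ⟨hγ.1, fun _ ht => hXY (hγ.2 _ ht)⟩

theorem Curve.comp {γ : ℝ → E} (hγ : Curve X γ) {φ : ℝ → ℝ} (hφ : Continuous φ)
    (hφI : MapsTo φ I I) : Curve X (γ ∘ φ) :=
  ⟨hγ.1.comp hφ, fun _ ht => hγ.2 _ (hφI ht)⟩

theorem Curve.reverse {γ : ℝ → E} (hγ : Curve X γ) : Curve X (fun t => γ (1 - t)) :=
  hγ.comp (φ := fun t => 1 - t) (by fun_prop) fun _ => Icc.mem_iff_one_sub_mem.1

theorem Curve.concat {γ δ : ℝ → E} (hγ : Curve X γ) (hδ : Curve X δ) (h : γ 1 = δ 0) :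
    Curve X (concat γ δ) := by
  have := hγ.1
  have := hδ.1
  refine ⟨Continuous.if_le (by fun_prop) (by fun_prop) (by fun_prop) (by fun_prop) ?_,
    fun t ht => ?_⟩
  · rintro _ rfl
    norm_num [h]
  · unfold Milnor.concat
    split_ifs with h1
    · exact hγ.2 _ ⟨by linarith [ht.1], by linarith⟩
    · exact hδ.2 _ ⟨by linarith, by linarith [ht.2]⟩

namespace Transport

variable (T : Transport X G)

theorem hol_clamp {γ : ℝ → E} (hγ : Curve X γ) :
    T.hol (fun t => γ (projIcc 0 1 zero_le_one t)) = T.hol γ := by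
  have hcont : Continuous fun p : ℝ × ℝ =>
      γ (p.1 + p.2 * (projIcc (0 : ℝ) 1 zero_le_one p.1 - p.1)) :=
    hγ.1.comp (continuous_fst.add (continuous_snd.mul
      ((continuous_projIcc.subtype_val.comp continuous_fst).sub continuous_fst)))
  have hconst : ∀ s ∈ I, ∀ t : ℝ,
      γ (s + t * (projIcc (0 : ℝ) 1 zero_le_one s - s)) = γ s := by
    intro s hs t
    rw [projIcc_of_mem zero_le_one hs, sub_self, mul_zero, add_zero]
  have hsq := T.hol_square (fun s t => γ (s + t * (projIcc (0 : ℝ) 1 zero_le_one s - s))) hcont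
    fun s hs t _ => by simpa only [hconst s hs t] using hγ.2 s hs
  simp only [hconst 0 unitInterval.zero_mem, hconst 1 unitInterval.one_mem,
    T.hol_const _ (hγ.2 0 unitInterval.zero_mem), T.hol_const _ (hγ.2 1 unitInterval.one_mem),
    zero_mul, add_zero, one_mul, mul_one, add_sub_cancel] at hsq
  exact hsq.symm

theorem hol_congr {γ δ : ℝ → E} (hγ : Curve X γ) (hδ : Continuous δ) (h : EqOn γ δ I) :
    T.hol γ = T.hol δ := by
  have hδX : Curve X δ := ⟨hδ, fun t ht => h ht ▸ hγ.2 t ht⟩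
  rw [← T.hol_clamp hγ, ← T.hol_clamp hδX]
  exact congrArg T.hol (funext fun t => h (projIcc _ _ _ t).2)

theorem hol_eq_of_homotopy {S : ℝ → ℝ → E} (hS : Continuous fun p : ℝ × ℝ => S p.1 p.2)
    (hX : ∀ s ∈ I, ∀ t ∈ I, S s t ∈ X) {x y : E} (h0 : ∀ s, S s 0 = x) (h1 : ∀ s, S s 1 = y) :
    T.hol (S 0) = T.hol (S 1) := by
  have hsq := T.hol_square S hS hX
  have hx := T.hol_const x (h0 0 ▸ hX 0 unitInterval.zero_mem 0 unitInterval.zero_mem)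
  have hy := T.hol_const y (h1 0 ▸ hX 0 unitInterval.zero_mem 1 unitInterval.one_mem)
  simp only [h0, h1, hx, hy, one_mul, mul_one] at hsq
  exact hsq.symm

theorem hol_subcurve_mul {γ : ℝ → E} (hγ : Curve X γ) {a b c : ℝ} (ha : 0 ≤ a) (hab : a ≤ b)
    (hbc : b ≤ c) (hc : c ≤ 1) :
    T.hol (fun s => γ (a + (b - a) * s)) * T.hol (fun s => γ (b + (c - b) * s)) =
      T.hol (fun s => γ (a + (c - a) * s)) := by
  have hcont := hγ.1
  have hsq := T.hol_square (fun s t => γ (a + ((b - a) + t * (c - b)) * s)) (by fun_prop) (by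
    intro s hs t ht
    have h1 : 0 ≤ (b - a) + t * (c - b) := by nlinarith [ht.1]
    have h2 : (b - a) + t * (c - b) ≤ c - a := by nlinarith [ht.2]
    refine hγ.2 _ ⟨?_, ?_⟩ <;> nlinarith [hs.1, hs.2])
  simp only [zero_mul, add_zero, one_mul, mul_one, mul_zero, sub_add_sub_cancel',
    T.hol_const _ (hγ.2 a ⟨ha, by linarith⟩)] at hsq
  have hbc' : (fun s => γ (b + (c - b) * s)) = fun s => γ (a + (b - a + s * (c - b))) := by
    funext s; congr 1; ring
  rw [hbc', hsq]

theorem hol_reverse {γ : ℝ → E} (hγ : Curve X γ) :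
    T.hol (fun t => γ (1 - t)) = (T.hol γ)⁻¹ := by
  have hcont := hγ.1
  have hsq := T.hol_square (fun s t => γ (s * (1 - t))) (by fun_prop) fun s hs t ht =>
    hγ.2 _ (unitInterval.mul_mem hs (Icc.mem_iff_one_sub_mem.1 ht))
  simp only [zero_mul, sub_zero, mul_one, one_mul, sub_self, mul_zero,
    T.hol_const _ (hγ.2 0 unitInterval.zero_mem)] at hsq
  exact eq_inv_of_mul_eq_one_right hsq

theorem hol_concat {γ δ : ℝ → E} (hγ : Curve X γ) (hδ : Curve X δ) (h : γ 1 = δ 0) :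
    T.hol (concat γ δ) = T.hol γ * T.hol δ := by
  have hc := hγ.concat hδ h
  have hcont := hc.1
  have hsplit := T.hol_subcurve_mul hc (a := 0) (b := 1 / 2) (c := 1) le_rfl (by norm_num)
    (by norm_num) le_rfl
  simp only [sub_zero, zero_add, one_mul] at hsplit
  rw [← hsplit]
  congr 1
  · refine Eq.symm (T.hol_congr hγ (hcont.comp (by fun_prop)) fun t ht => ?_)
    simp only [concat]
    rw [if_pos (by linarith [ht.2])]
    congr 1; ring
  · refine Eq.symm (T.hol_congr hδ (hcont.comp (by fun_prop)) fun t ht => ?_)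
    rcases ht.1.eq_or_lt with rfl | ht0
    · norm_num [concat, h]
    · simp only [concat]
      rw [if_neg (by linarith)]
      congr 1; ring

end Transport

/-! ### Flat sections -/

namespace Transport

variable {Ω : Type*} (T : Transport X (Equiv.Perm Ω))

/-- `f` is a flat section over `W` of the local system with fibre `Ω` pulled back along
`j : E' → E`. -/
def FlatAlong (j : E' → E) (W : Set E') (f : E' → Ω) : Prop :=
  ∀ γ : ℝ → E', Curve W γ → T.hol (fun t => j (γ t)) (f (γ 1)) = f (γ 0)

/-- `f` is a flat section over `W ⊆ X` of the local system with fibre `Ω` defined by `T`. -/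
def Flat (W : Set E) (f : E → Ω) : Prop :=
  T.FlatAlong (fun x => x) W f

theorem hol_square_apply (S : ℝ → ℝ → E) (hS : Continuous (fun p : ℝ × ℝ => S p.1 p.2))
    (hX : ∀ s ∈ I, ∀ t ∈ I, S s t ∈ X) (ω : Ω) :
    T.hol (fun s => S s 0) (T.hol (fun t => S 1 t) ω) =
      T.hol (fun t => S 0 t) (T.hol (fun s => S s 1) ω) :=
  congrArg (fun g : Equiv.Perm Ω => g ω) (T.hol_square S hS hX)

variable {T}

theorem Flat.apply {W : Set E} {f : E → Ω} (hf : T.Flat W f) {γ : ℝ → E} (hγ : Curve W γ) :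
    T.hol γ (f (γ 1)) = f (γ 0) :=
  hf γ hγ

theorem FlatAlong.mono {j : E' → E} {W W' : Set E'} {f : E' → Ω} (hf : T.FlatAlong j W f)
    (hW : W' ⊆ W) : T.FlatAlong j W' f :=
  fun _ hγ => hf _ (hγ.mono hW)

theorem FlatAlong.congr {j : E' → E} {W : Set E'} {f g : E' → Ω} (hf : T.FlatAlong j W f)
    (hfg : EqOn f g W) : T.FlatAlong j W g := fun γ hγ => by
  rw [← hfg (hγ.2 1 unitInterval.one_mem), ← hfg (hγ.2 0 unitInterval.zero_mem)]
  exact hf γ hγ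

theorem FlatAlong.comp {E'' : Type*} [TopologicalSpace E''] {j : E' → E} {W : Set E'} {f : E' → Ω}
    (hf : T.FlatAlong j W f) {W' : Set E''} {φ : E'' → E'} (hφ : Continuous φ)
    (hW : MapsTo φ W' W) : T.FlatAlong (fun y => j (φ y)) W' (fun y => f (φ y)) :=
  fun _ hγ => hf _ ⟨hφ.comp hγ.1, fun _ ht => hW (hγ.2 _ ht)⟩

theorem FlatAlong.of_homotopy {W : Set E'} {P : E' → ℝ → E} {f : E' → Ω}
    (hP : Continuous fun p : E' × ℝ => P p.1 p.2) (hPX : ∀ y ∈ W, ∀ t ∈ I, P y t ∈ X)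
    (hf : T.FlatAlong (fun y => P y 1) W f) :
    T.FlatAlong (fun y => P y 0) W (fun y => T.hol (P y) (f y)) := by
  intro γ hγ
  have hγc := hγ.1
  have hsq := T.hol_square_apply (fun s t => P (γ s) t)
    (hP.comp (f := fun p : ℝ × ℝ => (γ p.1, p.2)) (by fun_prop))
    (fun s hs t ht => hPX _ (hγ.2 s hs) t ht) (f (γ 1))
  rwa [hf γ hγ] at hsq

theorem flatAlong_of_contraction {W : Set E'} {P : E' → ℝ → E} {x : E}
    (hP : Continuous fun p : E' × ℝ => P p.1 p.2) (hPX : ∀ y ∈ W, ∀ t ∈ I, P y t ∈ X)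
    (h1 : ∀ y, P y 1 = x) (ω : Ω) : T.FlatAlong (fun y => P y 0) W (fun y => T.hol (P y) ω) :=
  FlatAlong.of_homotopy hP hPX fun γ hγ => by
    simp only [h1]
    have hx := hPX _ (hγ.2 0 unitInterval.zero_mem) 1 unitInterval.one_mem
    rw [h1] at hx
    rw [T.hol_const x hx, Equiv.Perm.one_apply]

/-- The holonomies around the loops `P y` are conjugate along `j`, so that their unique fixed points
form a flat section. -/
theorem FlatAlong.of_loops {W : Set E'} {j : E' → E} {P : E' → ℝ → E} {f : E' → Ω}
    (hP : Continuous fun p : E' × ℝ => P p.1 p.2) (h0 : ∀ y, P y 0 = j y) (h1 : ∀ y, P y 1 = j y)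
    (hPX : ∀ y ∈ W, ∀ t ∈ I, P y t ∈ X) (hf : ∀ y ∈ W, T.hol (P y) (f y) = f y)
    (hu : ∀ y ∈ W, ∀ ω, T.hol (P y) ω = ω → ω = f y) : T.FlatAlong j W f := by
  intro γ hγ
  have hγc := hγ.1
  have hsq := T.hol_square_apply (fun s t => P (γ s) t)
    (hP.comp (f := fun p : ℝ × ℝ => (γ p.1, p.2)) (by fun_prop))
    (fun s hs t ht => hPX _ (hγ.2 s hs) t ht) (f (γ 1))
  simp only [h0, h1, hf _ (hγ.2 1 unitInterval.one_mem)] at hsq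
  exact hu _ (hγ.2 0 unitInterval.zero_mem) _ hsq.symm

variable (T)

private theorem hol_subcurve_eq_of_flatAlong {j : E' → E} (hj : Continuous j) {N W : Set E'}
    (hWX : MapsTo j W X) {f : E' → Ω} (hf : T.FlatAlong j (N ∩ W) f) {γ : ℝ → E'} (hγ : Curve W γ)
    {a b : ℝ} (ha : 0 ≤ a) (hab : a ≤ b) (hb : b ≤ 1) (hN : ∀ t ∈ Icc a b, γ t ∈ N) :
    T.hol (fun s => j (γ (b * s))) (f (γ b)) = T.hol (fun s => j (γ (a * s))) (f (γ a)) := by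
  have hγc := hγ.1
  have hmid := hf (fun s => γ (a + (b - a) * s)) ⟨by fun_prop, fun s hs => by
    have hmem : a + (b - a) * s ∈ Icc a b := by constructor <;> nlinarith [hs.1, hs.2]
    exact ⟨hN _ hmem, hγ.2 _ ⟨ha.trans hmem.1, hmem.2.trans hb⟩⟩⟩
  have hsplit := T.hol_subcurve_mul (γ := fun t => j (γ t))
    ⟨by fun_prop, fun t ht => hWX (hγ.2 t ht)⟩ le_rfl ha hab hb
  simp only [sub_zero, zero_add] at hsplit
  simp only [mul_one, mul_zero, add_zero, add_sub_cancel] at hmid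
  rw [← hsplit, Equiv.Perm.mul_apply, hmid]

theorem flatAlong_of_local {j : E' → E} (hj : Continuous j) {W : Set E'} (hWX : MapsTo j W X)
    {f : E' → Ω} (h : ∀ q ∈ W, ∃ N ∈ 𝓝 q, T.FlatAlong j (N ∩ W) f) : T.FlatAlong j W f := by
  intro γ hγ
  let P : I → Ω := fun t => T.hol (fun s => j (γ (t * s))) (f (γ t))
  have hlc : IsLocallyConstant P := by
    refine (IsLocallyConstant.iff_eventually_eq P).2 fun t => ?_
    obtain ⟨N, hN, hf⟩ := h (γ t) (hγ.2 t t.2)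
    obtain ⟨ε, hε, hball⟩ := Metric.mem_nhds_iff.1 (hγ.1.continuousAt.preimage_mem_nhds hN)
    filter_upwards [continuous_subtype_val.continuousAt.preimage_mem_nhds
      (Metric.ball_mem_nhds (t : ℝ) hε)] with t' ht'
    have hN' : ∀ s ∈ uIcc (t : ℝ) t', γ s ∈ N := fun s hs =>
      hball ((convex_ball (t : ℝ) ε).ordConnected.uIcc_subset (Metric.mem_ball_self hε) ht' hs)
    rcases le_total (t : ℝ) t' with hle | hle
    · rw [uIcc_of_le hle] at hN'
      exact T.hol_subcurve_eq_of_flatAlong hj hWX hf hγ t.2.1 hle t'.2.2 hN'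
    · rw [uIcc_of_ge hle] at hN'
      exact (T.hol_subcurve_eq_of_flatAlong hj hWX hf hγ t'.2.1 hle t.2.2 hN').symm
  have h01 := hlc.apply_eq_of_preconnectedSpace 1 0
  simpa [P, T.hol_const _ (hWX (hγ.2 0 unitInterval.zero_mem))] using h01

theorem exists_flatAlong_of_loops [Nonempty Ω] {A : Type*} {j : E' → E} (hj : Continuous j)
    {W : Set E'} (hWX : MapsTo j W X) {U : A → Set E'} (hU : ∀ a, IsOpen (U a))
    (hWU : ∀ y ∈ W, ∃ a, y ∈ U a) {P : A → E' → ℝ → E}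
    (hP : ∀ a, Continuous fun p : E' × ℝ => P a p.1 p.2) (h0 : ∀ a y, P a y 0 = j y)
    (h1 : ∀ a y, P a y 1 = j y) (hPX : ∀ a, ∀ y ∈ U a ∩ W, ∀ t ∈ I, P a y t ∈ X)
    (hfix : ∀ a, ∀ y ∈ U a ∩ W, ∃! ω, T.hol (P a y) ω = ω)
    (hagree : ∀ a b, ∀ y ∈ W, y ∈ U a → y ∈ U b → ∀ ω, T.hol (P a y) ω = ω → T.hol (P b y) ω = ω) :
    ∃ f : E' → Ω, T.FlatAlong j W f := by
  have hcommon : ∀ y ∈ W, ∃ ω, ∀ a, y ∈ U a → T.hol (P a y) ω = ω := fun y hy => by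
    obtain ⟨a, ha⟩ := hWU y hy
    obtain ⟨ω, hω, -⟩ := hfix a y ⟨ha, hy⟩
    exact ⟨ω, fun b hb => hagree a b y hy ha hb ω hω⟩
  choose! f hf using hcommon
  refine ⟨f, T.flatAlong_of_local hj hWX fun y hy => ?_⟩
  obtain ⟨a, ha⟩ := hWU y hy
  exact ⟨U a, (hU a).mem_nhds ha, .of_loops (hP a) (h0 a) (h1 a) (hPX a)
    (fun y' hy' => hf y' hy'.2 a hy'.1)
    fun y' hy' ω hω => (hfix a y' hy').unique hω (hf y' hy'.2 a hy'.1)⟩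

theorem exists_flatAlong_union {j : E' → E} (hj : Continuous j) {U V W : Set E'}
    (hWX : MapsTo j W X) (hU : IsOpen U) (hV : IsOpen V) (hWUV : W ⊆ U ∪ V) {f g : E' → Ω}
    (hf : T.FlatAlong j (U ∩ W) f) (hg : T.FlatAlong j (V ∩ W) g)
    (hfg : ∀ x ∈ W, x ∈ U → x ∈ V → f x = g x) : ∃ h : E' → Ω, T.FlatAlong j W h := by
  classical
  refine ⟨U.piecewise f g, T.flatAlong_of_local hj hWX fun q hq => ?_⟩
  rcases hWUV hq with h | h
  · exact ⟨U, hU.mem_nhds h, hf.congr fun x hx => (piecewise_eq_of_mem _ _ _ hx.1).symm⟩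
  · refine ⟨V, hV.mem_nhds h, hg.congr fun x hx => ?_⟩
    by_cases hxU : x ∈ U
    · rw [piecewise_eq_of_mem _ _ _ hxU, hfg x hx.2 hxU hx.1]
    · rw [piecewise_eq_of_notMem _ _ _ hxU]

end Transport
end Transport

/-! ### Extending flat sections from a generic line -/

section Isotopy

variable {E ι : Type*} [NormedAddCommGroup E] {δ : ℝ} {b d : ι → E} {y : E}

theorem max_one_sub_div_eq_zero (hδ : 0 < δ) {c : E} (hy : δ ≤ ‖y - c‖) :
    max 0 (1 - ‖y - c‖ / δ) = 0 :=
  max_eq_left (sub_nonpos.2 ((one_le_div hδ).2 hy))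

variable [NormedSpace ℝ E] [Fintype ι]

/-- The map moving each `b i` by `d i`, supported in the `δ`-balls around the `b i`. -/
noncomputable def pushPoints (δ : ℝ) (b d : ι → E) (y : E) : E :=
  y + ∑ i, max 0 (1 - ‖y - b i‖ / δ) • d i

theorem pushPoints_of_far (hδ : 0 < δ) (hy : ∀ i, δ ≤ ‖y - b i‖) : pushPoints δ b d y = y := by
  simp [pushPoints, max_one_sub_div_eq_zero hδ (hy _)]

theorem pushPoints_of_near (hδ : 0 < δ) (hb : Pairwise fun i j => 2 * δ ≤ ‖b i - b j‖) {i : ι}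
    (hy : ‖y - b i‖ < δ) : pushPoints δ b d y = y + (1 - ‖y - b i‖ / δ) • d i := by
  rw [pushPoints, Finset.sum_eq_single i (fun k _ hk => ?_) (by simp), max_eq_right]
  · exact sub_nonneg.2 ((div_le_one hδ).2 hy.le)
  · have htri := norm_sub_le (y - b i) (y - b k)
    rw [sub_sub_sub_cancel_left, norm_sub_rev] at htri
    rw [max_one_sub_div_eq_zero hδ (by linarith [hb hk.symm]), zero_smul]

theorem pushPoints_ne (hδ : 0 < δ) (hb : Pairwise fun i j => 2 * δ ≤ ‖b i - b j‖)
    (hd : ∀ i, ‖d i‖ < δ / 2) {j : ι} (hy : y ≠ b j) : pushPoints δ b d y ≠ b j + d j := by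
  intro heq
  by_cases hnear : ∃ i, ‖y - b i‖ < δ
  · obtain ⟨i, hi⟩ := hnear
    have hq0 : 0 ≤ ‖y - b i‖ / δ := by positivity
    have hq1 : ‖y - b i‖ / δ ≤ 1 := (div_le_one hδ).2 hi.le
    rw [pushPoints_of_near hδ hb hi] at heq
    rcases eq_or_ne i j with rfl | hij
    · have hmove : y - b i = (‖y - b i‖ / δ) • d i := by
        rw [sub_smul, one_smul] at heq
        rw [sub_eq_iff_eq_add, ← sub_eq_zero, ← sub_eq_zero.2 heq]
        abel
      have hpos : 0 < ‖y - b i‖ / δ := div_pos (norm_pos_iff.2 (sub_ne_zero.2 hy)) hδ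
      have hnorm := congrArg norm hmove
      rw [norm_smul, Real.norm_of_nonneg hq0] at hnorm
      have hlt := mul_lt_mul_of_pos_left (hd i) hpos
      rw [← hnorm, div_mul_div_comm, mul_comm δ, mul_div_mul_right _ _ hδ.ne'] at hlt
      linarith [norm_nonneg (y - b i)]
    · have hdiff : b i - b j = d j - (1 - ‖y - b i‖ / δ) • d i - (y - b i) := by
        rw [← eq_sub_iff_add_eq'] at heq
        rw [heq]
        abel
      have hsmall : ‖(1 - ‖y - b i‖ / δ) • d i‖ ≤ ‖d i‖ := by
        rw [norm_smul, Real.norm_of_nonneg (by linarith)]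
        exact mul_le_of_le_one_left (norm_nonneg _) (by linarith)
      have h1 := norm_sub_le (d j - (1 - ‖y - b i‖ / δ) • d i) (y - b i)
      have h2 := norm_sub_le (d j) ((1 - ‖y - b i‖ / δ) • d i)
      rw [← hdiff] at h1
      linarith [hb hij, hd i, hd j]
  · push Not at hnear
    rw [pushPoints_of_far hδ hnear] at heq
    have := hnear j
    rw [heq, add_sub_cancel_left] at this
    linarith [hd j]

end Isotopy

section Extension

theorem norm_add_mul_sub_le {x y : ℂ} {t : ℝ} (ht : t ∈ I) :
    ‖x + t * (y - x)‖ ≤ (1 - t) * ‖x‖ + t * ‖y‖ := by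
  have hcomb : x + t * (y - x) = ((1 - t : ℝ) : ℂ) * x + (t : ℂ) * y := by push_cast; ring
  rw [hcomb]
  refine (norm_add_le _ _).trans_eq ?_
  rw [norm_mul, norm_mul, Complex.norm_real, Complex.norm_real, Real.norm_of_nonneg ht.1,
    Real.norm_of_nonneg (sub_nonneg.2 ht.2)]

theorem eventually_forall_mem_of_isOpen {E E' : Type*} [TopologicalSpace E] [TopologicalSpace E']
    {X : Set E} (hX : IsOpen X) {S : E' → ℝ → E} (hS : Continuous fun p : E' × ℝ => S p.1 p.2)
    {b : E'} (hb : ∀ t ∈ I, S b t ∈ X) : ∀ᶠ x in 𝓝 b, ∀ t ∈ I, S x t ∈ X :=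
  isCompact_Icc.eventually_forall_of_forall_eventually fun t ht =>
    hS.continuousAt.eventually (hX.mem_nhds (hb t ht))

theorem exists_curve_compl {S : Set ℂ} (hS : S.Countable) {y y' : ℂ} (hy : y ∉ S) (hy' : y' ∉ S) :
    ∃ γ : ℝ → ℂ, Curve Sᶜ γ ∧ γ 0 = y ∧ γ 1 = y' := by
  have h := (hS.isPathConnected_compl_of_one_lt_rank
    (Complex.rank_real_complex ▸ Nat.one_lt_ofNat)).joinedIn y hy y' hy'
  refine ⟨h.somePath.extend, ⟨h.somePath.continuous_extend, fun t ht => ?_⟩, by simp, by simp⟩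
  rw [Path.extend_apply _ ht]
  exact h.somePath_mem _

variable {ι : Type*} (α β : ι → ℂ)

/-- The complement in `ℂ²` of the affine lines `y = α i * x + β i`. -/
def lineCompl : Set (ℂ × ℂ) :=
  {q | ∀ i, q.2 ≠ α i * q.1 + β i}

/-- The intersection of the complement of the lines with the vertical line over `x`. -/
def fiber (x : ℂ) : Set ℂ :=
  {y | ∀ i, y ≠ α i * x + β i}

/-- The abscissas over which two of the lines meet. -/
def critical : Set ℂ :=
  {x | ∃ i j, i ≠ j ∧ α i * x + β i = α j * x + β j}

theorem isOpen_lineCompl [Finite ι] : IsOpen (lineCompl α β) := by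
  simp only [lineCompl, ofPred_forall]
  exact isOpen_iInter_of_finite fun i => isOpen_ne_fun (by fun_prop) (by fun_prop)

variable {α β}

theorem finite_critical [Finite ι] {x₀ : ℂ} (hx₀ : x₀ ∉ critical α β) :
    (critical α β).Finite := by
  refine (finite_range fun p : ι × ι => (β p.2 - β p.1) / (α p.1 - α p.2)).subset ?_
  rintro x ⟨i, j, hij, h⟩
  refine ⟨(i, j), (div_eq_iff fun h0 => hx₀ ⟨i, j, hij, ?_⟩).2 (by linear_combination -h)⟩
  dsimp only at h0
  linear_combination h + (x₀ - x) * h0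

theorem exists_curve_fiber [Finite ι] {x y y' : ℂ} (hy : y ∈ fiber α β x)
    (hy' : y' ∈ fiber α β x) : ∃ γ : ℝ → ℂ, Curve (fiber α β x) γ ∧ γ 0 = y ∧ γ 1 = y' := by
  have hfib : fiber α β x = (range fun i => α i * x + β i)ᶜ := by
    ext z; simp [fiber, eq_comm]
  rw [hfib] at hy hy' ⊢
  exact exists_curve_compl (finite_range _).countable hy hy'

theorem Curve.vertical {x : ℂ} {γ : ℝ → ℂ} (hγ : Curve (fiber α β x) γ) :
    Curve (lineCompl α β) (fun t => (x, γ t)) :=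
  ⟨by have := hγ.1; fun_prop, hγ.2⟩

section NearInfinity

variable [Fintype ι] (α β)

/-- A bound for the slopes and intercepts of the lines. -/
noncomputable def lineBound : ℝ :=
  1 + ∑ i, (‖α i‖ + ‖β i‖)

/-- A neighbourhood of vertical infinity which avoids all the lines. -/
def nearInfinity : Set (ℂ × ℂ) :=
  {q | lineBound α β * (1 + ‖q.1‖) < ‖q.2‖}

theorem isOpen_nearInfinity : IsOpen (nearInfinity α β) :=
  isOpen_lt (by fun_prop) (by fun_prop)

theorem one_le_lineBound : 1 ≤ lineBound α β :=
  le_add_of_nonneg_right (by positivity)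

theorem norm_line_add_one_le (i : ι) (x : ℂ) :
    ‖α i * x + β i‖ + 1 ≤ lineBound α β * (1 + ‖x‖) := by
  have hi : 1 + (‖α i‖ + ‖β i‖) ≤ lineBound α β :=
    add_le_add_right (Finset.single_le_sum (f := fun i => ‖α i‖ + ‖β i‖)
      (fun i _ => by positivity) (Finset.mem_univ i)) 1
  have htri : ‖α i * x + β i‖ ≤ ‖α i‖ * ‖x‖ + ‖β i‖ := (norm_add_le _ _).trans_eq (by rw [norm_mul])
  nlinarith [norm_nonneg x, norm_nonneg (α i), mul_nonneg (norm_nonneg (β i)) (norm_nonneg x)]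

theorem nearInfinity_subset : nearInfinity α β ⊆ lineCompl α β := fun q hq i h => by
  have := norm_line_add_one_le α β i q.1
  rw [nearInfinity, mem_ofPred_eq, h] at hq
  linarith

variable {α β}

theorem nearInfinity_segment {x x' y : ℂ} (hx : (x, y) ∈ nearInfinity α β)
    (hx' : (x', y) ∈ nearInfinity α β) {t : ℝ} (ht : t ∈ I) :
    (x + t * (x' - x), y) ∈ nearInfinity α β := by
  simp only [nearInfinity, mem_ofPred_eq] at *
  have hC := one_le_lineBound α β
  have hle := mul_le_mul_of_nonneg_left (norm_add_mul_sub_le (x := x) (y := x') ht)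
    (zero_le_one.trans hC)
  rcases ht.1.eq_or_lt with rfl | ht0
  · simpa using hx
  · nlinarith [mul_lt_mul_of_pos_left hx' ht0, mul_le_mul_of_nonneg_left hx.le (sub_nonneg.2 ht.2)]

theorem nearInfinity_scale {x y : ℂ} (h : (x, y) ∈ nearInfinity α β) {s : ℝ} (hs : 1 ≤ s) :
    (x, s * y) ∈ nearInfinity α β := by
  simp only [nearInfinity, mem_ofPred_eq, norm_mul, Complex.norm_real,
    Real.norm_of_nonneg (zero_le_one.trans hs)] at *
  exact h.trans_le (le_mul_of_one_le_left (norm_nonneg y) hs)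

theorem nearInfinity_contract {q : ℂ × ℂ} (hq : q ∈ nearInfinity α β) (x₀ : ℂ) {t : ℝ}
    (ht : t ∈ I) :
    (q.1 + t * (x₀ - q.1), ((1 + t * ‖x₀‖ : ℝ) : ℂ) * q.2) ∈ nearInfinity α β := by
  have hpos : 0 ≤ t * ‖x₀‖ := mul_nonneg ht.1 (norm_nonneg _)
  have hC := one_le_lineBound α β
  have hx : ‖q.1 + t * (x₀ - q.1)‖ ≤ ‖q.1‖ + t * ‖x₀‖ := by
    nlinarith [norm_add_mul_sub_le (x := q.1) (y := x₀) ht, norm_nonneg q.1, ht.1]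
  simp only [nearInfinity, mem_ofPred_eq, norm_mul, Complex.norm_real] at *
  rw [Real.norm_of_nonneg (by linarith : 0 ≤ 1 + t * ‖x₀‖)]
  calc lineBound α β * (1 + ‖q.1 + t * (x₀ - q.1)‖)
      ≤ lineBound α β * ((1 + t * ‖x₀‖) * (1 + ‖q.1‖)) := by
        gcongr
        nlinarith [mul_nonneg hpos (norm_nonneg q.1)]
    _ = (1 + t * ‖x₀‖) * (lineBound α β * (1 + ‖q.1‖)) := by ring
    _ < (1 + t * ‖x₀‖) * ‖q.2‖ := mul_lt_mul_of_pos_left hq (by linarith)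

theorem exists_mem_nearInfinity (α β : ι → ℂ) (x : ℂ) : ∃ y : ℂ, (x, y) ∈ nearInfinity α β := by
  refine ⟨(lineBound α β * (1 + ‖x‖) + 1 : ℝ), ?_⟩
  have := one_le_lineBound α β
  rw [nearInfinity, mem_ofPred_eq, Complex.norm_real, Real.norm_of_nonneg (by positivity)]
  exact lt_add_one _

end NearInfinity

variable [Fintype ι] {Ω : Type*} (T : Transport (lineCompl α β) (Equiv.Perm Ω))

theorem exists_flat_nearInfinity {x₀ : ℂ} {f₀ : ℂ → Ω}
    (h₀ : T.FlatAlong (Prod.mk x₀) (fiber α β x₀) f₀) :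
    ∃ f : ℂ × ℂ → Ω, T.Flat (nearInfinity α β) f ∧
      ∀ y, (x₀, y) ∈ nearInfinity α β → f (x₀, y) = f₀ y := by
  let P : ℂ × ℂ → ℝ → ℂ × ℂ := fun q t =>
    (q.1 + t * (x₀ - q.1), ((1 + t * ‖x₀‖ : ℝ) : ℂ) * q.2)
  have hPX : ∀ q ∈ nearInfinity α β, ∀ t ∈ I, P q t ∈ lineCompl α β := fun q hq t ht =>
    nearInfinity_subset α β (nearInfinity_contract hq x₀ ht)
  have hP1 : (fun q => P q 1) = fun q => (x₀, (P q 1).2) := funext fun q => by simp [P]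
  have hend : T.FlatAlong (fun q => P q 1) (nearInfinity α β) (fun q => f₀ (P q 1).2) := by
    rw [hP1]
    exact h₀.comp (φ := fun q => (P q 1).2) (by fun_prop) fun q hq => by
      have := hPX q hq 1 unitInterval.one_mem
      rwa [congrFun hP1 q] at this
  refine ⟨fun q => T.hol (P q) (f₀ (P q 1).2), ?_, fun y hy => ?_⟩
  · have hP0 : (fun q => P q 0) = fun q => q := funext fun q => by simp [P]
    have := hend.of_homotopy (by fun_prop) hPX
    rwa [hP0] at this
  · have hx₀ : ∀ t, P (x₀, y) t = (x₀, (P (x₀, y) t).2) := fun t => by simp [P]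
    have := h₀ (fun t => (P (x₀, y) t).2) ⟨by fun_prop, fun t ht => by
      have := hPX _ hy t ht
      rwa [hx₀] at this⟩
    simp only [← hx₀] at this
    simpa [P] using this

/-- The flat section `f` near vertical infinity extends to a flat section on the vertical line
over `x`. -/
def ExtendsToFiber (f : ℂ × ℂ → Ω) (x : ℂ) : Prop :=
  ∃ g : ℂ → Ω, T.FlatAlong (Prod.mk x) (fiber α β x) g ∧
    ∀ y, (x, y) ∈ nearInfinity α β → g y = f (x, y)

variable {T} {f : ℂ × ℂ → Ω}

theorem ExtendsToFiber.of_forall_lt_norm (hf : T.Flat (nearInfinity α β) f) {x : ℂ} {g : ℂ → Ω}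
    (hg : T.FlatAlong (Prod.mk x) (fiber α β x) g) {R : ℝ}
    (hR : ∀ y, (x, y) ∈ nearInfinity α β → R < ‖y‖ → g y = f (x, y)) : ExtendsToFiber T f x := by
  refine ⟨g, hg, fun y hy => ?_⟩
  let γ : ℝ → ℂ := fun t => ((1 + t * |R| : ℝ) : ℂ) * y
  have hγY : ∀ t ∈ I, (x, γ t) ∈ nearInfinity α β := fun t ht =>
    nearInfinity_scale hy (le_add_of_nonneg_right (mul_nonneg ht.1 (abs_nonneg R)))
  have hlarge : R < ‖γ 1‖ := by
    have hy1 : 1 < ‖y‖ := lt_of_le_of_lt (by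
      nlinarith [one_le_lineBound α β, norm_nonneg x] : (1 : ℝ) ≤ lineBound α β * (1 + ‖x‖)) hy
    simp only [γ, norm_mul, Complex.norm_real, one_mul]
    rw [Real.norm_of_nonneg (by positivity)]
    nlinarith [le_abs_self R, abs_nonneg R]
  have hγ0 : γ 0 = y := by simp [γ]
  have hgγ := hg γ ⟨by fun_prop, fun t ht => nearInfinity_subset α β (hγY t ht)⟩
  have hfγ := hf (fun t => (x, γ t)) ⟨by fun_prop, hγY⟩
  rw [hR _ (hγY 1 unitInterval.one_mem) hlarge] at hgγ
  rw [← hγ0, ← hgγ, ← hfγ]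

theorem ExtendsToFiber.of_close (hf : T.Flat (nearInfinity α β) f) {x x' : ℂ} {δ : ℝ}
    (hδ : 0 < δ) (hsep : Pairwise fun i j => 2 * δ ≤ ‖(α i * x + β i) - (α j * x + β j)‖)
    (hclose : ∀ i, ‖α i * (x' - x)‖ < δ / 2) (hx' : ExtendsToFiber T f x') :
    ExtendsToFiber T f x := by
  obtain ⟨g, hg, hgf⟩ := hx'
  let d : ℝ → ι → ℂ := fun t i => t * (α i * (x' - x))
  let Ψ : ℂ → ℝ → ℂ := fun y t => pushPoints δ (fun i => α i * x + β i) (d t) y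
  let P : ℂ → ℝ → ℂ × ℂ := fun y t => (x + t * (x' - x), Ψ y t)
  have hΨc : Continuous fun p : ℂ × ℝ => Ψ p.1 p.2 := by
    simp only [Ψ, d, pushPoints]
    fun_prop
  have hd : ∀ t ∈ I, ∀ i, ‖d t i‖ < δ / 2 := fun t ht i => by
    rw [norm_mul, Complex.norm_real, Real.norm_of_nonneg ht.1]
    exact (mul_le_of_le_one_left (norm_nonneg _) ht.2).trans_lt (hclose i)
  have hPX : ∀ y ∈ fiber α β x, ∀ t ∈ I, P y t ∈ lineCompl α β := fun y hy t ht j h =>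
    pushPoints_ne hδ hsep (hd t ht) (hy j) (h.trans (by simp only [P, d]; ring))
  have hP1 : ∀ y, P y 1 = (x', Ψ y 1) := fun y => by simp [P]
  have hend : T.FlatAlong (fun y => P y 1) (fiber α β x) (fun y => g (Ψ y 1)) := by
    simp only [hP1]
    refine hg.comp (by fun_prop) fun y hy => ?_
    have := hPX y hy 1 unitInterval.one_mem
    rwa [hP1] at this
  have hflat : T.FlatAlong (Prod.mk x) (fiber α β x) fun y => T.hol (P y) (g (Ψ y 1)) := by
    have hP0 : (fun y => P y 0) = Prod.mk x := by
      funext y; simp [P, Ψ, d, pushPoints]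
    exact hP0 ▸ hend.of_homotopy (by fun_prop) hPX
  refine .of_forall_lt_norm hf hflat (R := lineBound α β * (1 + ‖x'‖) + δ + ‖x‖ * lineBound α β)
    fun y hy hlarge => ?_
  have hfar : ∀ i, δ ≤ ‖y - (α i * x + β i)‖ := fun i => by
    have := norm_line_add_one_le α β i x
    have := norm_sub_norm_le y (α i * x + β i)
    have := one_le_lineBound α β
    nlinarith [norm_nonneg x']
  have hy' : (x', y) ∈ nearInfinity α β :=
    lt_of_le_of_lt (by nlinarith [norm_nonneg x, one_le_lineBound α β]) hlarge
  have hfix : ∀ t, Ψ y t = y := fun t => pushPoints_of_far hδ hfar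
  have hseg := hf (fun t => (x + t * (x' - x), y))
    ⟨by fun_prop, fun t ht => nearInfinity_segment hy hy' ht⟩
  simpa [P, hfix, hgf y hy'] using hseg

theorem ExtendsToFiber.of_notMem_critical (hf : T.Flat (nearInfinity α β) f) {x₀ : ℂ}
    (hx₀ : x₀ ∉ critical α β) (h₀ : ExtendsToFiber T f x₀) {x : ℂ} (hx : x ∉ critical α β) :
    ExtendsToFiber T f x := by
  have hconn : IsPreconnected (critical α β)ᶜ :=
    ((finite_critical hx₀).countable.isConnected_compl_of_one_lt_rank
      (Complex.rank_real_complex ▸ Nat.one_lt_ofNat)).isPreconnected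
  refine (hconn.induction₂ (fun a b => ExtendsToFiber T f a ↔ ExtendsToFiber T f b)
    (fun a ha => ?_) (fun _ _ _ _ _ _ => Iff.trans) (fun _ _ _ _ => Iff.symm) hx₀ hx).1 h₀
  have hsep : ∀ᶠ δ : ℝ in 𝓝[>] 0, ∀ i j, i ≠ j →
      2 * δ < ‖(α i * a + β i) - (α j * a + β j)‖ := by
    simp only [Filter.eventually_all]
    refine fun i j hij => Filter.Eventually.filter_mono nhdsWithin_le_nhds ?_
    have hpos : 2 * (0 : ℝ) < ‖(α i * a + β i) - (α j * a + β j)‖ := by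
      rw [mul_zero, norm_pos_iff, sub_ne_zero]
      exact fun h => ha ⟨i, j, hij, h⟩
    exact (by fun_prop : Continuous fun δ : ℝ => 2 * δ).continuousAt.eventually_lt_const hpos
  obtain ⟨δ, hδsep, hδ⟩ := (hsep.and self_mem_nhdsWithin).exists
  have hsep' : ∀ᶠ x in 𝓝 a, ∀ i j, i ≠ j →
      2 * δ < ‖(α i * x + β i) - (α j * x + β j)‖ := by
    simp only [Filter.eventually_all]
    exact fun i j hij => (by fun_prop : Continuous fun x =>
      ‖(α i * x + β i) - (α j * x + β j)‖).continuousAt.eventually_const_lt (hδsep i j hij)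
  have hclose : ∀ᶠ x in 𝓝 a, ∀ i, ‖α i * (x - a)‖ < δ / 2 := by
    refine Filter.eventually_all.2 fun i => ?_
    exact (by fun_prop : Continuous fun x => ‖α i * (x - a)‖).continuousAt.eventually_lt_const
      (by simpa using hδ)
  filter_upwards [nhdsWithin_le_nhds hsep', nhdsWithin_le_nhds hclose] with x hxsep hxclose
  exact ⟨.of_close hf hδ (fun i j hij => (hxsep i j hij).le) fun i => by
      rw [← norm_neg, ← mul_neg, neg_sub]; exact hxclose i,
    .of_close hf hδ (fun i j hij => (hδsep i j hij).le) hxclose⟩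

/-- Over a critical abscissa this follows by pushing the curve to a nearby generic line. -/
theorem hol_vertical_eq (hf : T.Flat (nearInfinity α β) f) {x₀ : ℂ} (hx₀ : x₀ ∉ critical α β)
    (h₀ : ExtendsToFiber T f x₀) {x : ℂ} {γ : ℝ → ℂ} (hγ : Curve (fiber α β x) γ)
    (h0 : (x, γ 0) ∈ nearInfinity α β) (h1 : (x, γ 1) ∈ nearInfinity α β) :
    T.hol (fun t => (x, γ t)) (f (x, γ 1)) = f (x, γ 0) := by
  have hγc := hγ.1
  have hX : ∀ᶠ x' in 𝓝 x, ∀ t ∈ I, (x', γ t) ∈ lineCompl α β :=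
    eventually_forall_mem_of_isOpen (isOpen_lineCompl α β) (by fun_prop) hγ.2
  have hY : ∀ y, (x, y) ∈ nearInfinity α β → ∀ᶠ x' in 𝓝 x, (x', y) ∈ nearInfinity α β :=
    fun y hy => (by fun_prop : Continuous fun x' => (x', y)).continuousAt.eventually
      ((isOpen_nearInfinity α β).mem_nhds hy)
  obtain ⟨ε, hε, hball⟩ := Metric.eventually_nhds_iff_ball.1 (hX.and ((hY _ h0).and (hY _ h1)))
  have hdense : Dense (critical α β)ᶜ := (finite_critical hx₀).countable.dense_compl ℝ
  obtain ⟨x', hx', hdist⟩ := hdense.exists_dist_lt x hε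
  obtain ⟨g, hg, hgf⟩ := h₀.of_notMem_critical hf hx₀ hx'
  have hmem : ∀ s ∈ I, x + (s : ℂ) * (x' - x) ∈ Metric.ball x ε := fun s hs =>
    (convex_ball x ε).add_smul_sub_mem (Metric.mem_ball_self hε)
      (by rwa [Metric.mem_ball, dist_comm]) hs
  have hx'ball : x' ∈ Metric.ball x ε := by rwa [Metric.mem_ball, dist_comm]
  obtain ⟨hx'X, hx'0, hx'1⟩ := hball x' hx'ball
  have hsq := T.hol_square_apply (fun s t => (x + (s : ℂ) * (x' - x), γ t)) (by fun_prop)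
    (fun s hs t ht => (hball _ (hmem s hs)).1 t ht) (f (x', γ 1))
  have hf0 := hf (fun s : ℝ => (x + (s : ℂ) * (x' - x), γ 0))
    ⟨by fun_prop, fun s hs => (hball _ (hmem s hs)).2.1⟩
  have hf1 := hf (fun s : ℝ => (x + (s : ℂ) * (x' - x), γ 1))
    ⟨by fun_prop, fun s hs => (hball _ (hmem s hs)).2.2⟩
  simp only [Complex.ofReal_zero, Complex.ofReal_one, zero_mul, one_mul, add_zero,
    add_sub_cancel] at hsq hf0 hf1
  have hgγ := hg γ ⟨hγc, hx'X⟩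
  rw [hgf _ hx'0, hgf _ hx'1] at hgγ
  rw [← hf0, ← hgγ, hsq, hf1]

variable (T f) in
/-- `ω` is obtained from the section `f` near vertical infinity by transport down the vertical
line through `q`. -/
def IsVerticalTransport (q : ℂ × ℂ) (ω : Ω) : Prop :=
  ∃ γ : ℝ → ℂ, Curve (fiber α β q.1) γ ∧ γ 0 = q.2 ∧ (q.1, γ 1) ∈ nearInfinity α β ∧
    T.hol (fun t => (q.1, γ t)) (f (q.1, γ 1)) = ω

theorem IsVerticalTransport.unique (hf : T.Flat (nearInfinity α β) f) {x₀ : ℂ}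
    (hx₀ : x₀ ∉ critical α β) (h₀ : ExtendsToFiber T f x₀) {q : ℂ × ℂ} {ω ω' : Ω}
    (h : IsVerticalTransport T f q ω) (h' : IsVerticalTransport T f q ω') : ω = ω' := by
  obtain ⟨γ, hγ, hγ0, hγ1, rfl⟩ := h
  obtain ⟨γ', hγ', hγ'0, hγ'1, rfl⟩ := h'
  have hj : γ (1 - 1) = γ' 0 := by rw [sub_self, hγ0, hγ'0]
  have hloop := hol_vertical_eq hf hx₀ h₀ (hγ.reverse.concat hγ' hj) (by simpa using hγ1)
    (by simpa using hγ'1)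
  rw [comp_concat, T.hol_concat hγ.vertical.reverse hγ'.vertical (by rw [hj]),
    T.hol_reverse hγ.vertical, Equiv.Perm.mul_apply, Equiv.Perm.inv_eq_iff_eq] at hloop
  simpa using hloop.symm

theorem exists_flat_of_extendsToFiber (hf : T.Flat (nearInfinity α β) f) {x₀ : ℂ}
    (hx₀ : x₀ ∉ critical α β) (h₀ : ExtendsToFiber T f x₀) :
    ∃ F : ℂ × ℂ → Ω, T.Flat (lineCompl α β) F := by
  have hex : ∀ q, ∃ ω, q ∈ lineCompl α β → IsVerticalTransport T f q ω := fun q => by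
    obtain ⟨y', hy'⟩ := exists_mem_nearInfinity α β q.1
    by_cases hq : q ∈ lineCompl α β
    · obtain ⟨γ, hγ, hγ0, rfl⟩ := exists_curve_fiber (y := q.2) (y' := y') hq
        (nearInfinity_subset α β hy')
      exact ⟨_, fun _ => ⟨γ, hγ, hγ0, hy', rfl⟩⟩
    · exact ⟨f q, fun h => absurd h hq⟩
  choose F hF using hex
  refine ⟨F, T.flatAlong_of_local continuous_id (mapsTo_id _) fun q hq => ?_⟩
  obtain ⟨γ, hγ, hγ0, hγ1, -⟩ := hF q hq
  have hγc := hγ.1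
  let P : ℂ × ℂ → ℝ → ℂ × ℂ := fun q' t => (q'.1, γ t + (q'.2 - q.2))
  have hPc : Continuous fun p : (ℂ × ℂ) × ℝ => P p.1 p.2 := by fun_prop
  have hP0 : ∀ q', P q' 0 = q' := fun q' => by simp [P, hγ0]
  have hPX : ∀ᶠ q' in 𝓝 q, ∀ t ∈ I, P q' t ∈ lineCompl α β :=
    eventually_forall_mem_of_isOpen (isOpen_lineCompl α β) hPc fun t ht => by
      simpa [P] using hγ.vertical.2 t ht
  have hPY : ∀ᶠ q' in 𝓝 q, P q' 1 ∈ nearInfinity α β :=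
    (by fun_prop : Continuous fun q' => P q' 1).continuousAt.eventually
      ((isOpen_nearInfinity α β).mem_nhds (by simpa [P] using hγ1))
  refine ⟨_, hPX.and hPY, ?_⟩
  have hend : T.FlatAlong (fun q' => P q' 1)
      ({q' | (∀ t ∈ I, P q' t ∈ lineCompl α β) ∧ P q' 1 ∈ nearInfinity α β} ∩ lineCompl α β)
      (fun q' => f (P q' 1)) :=
    Transport.FlatAlong.comp hf (by fun_prop) fun q' hq' => hq'.1.2
  have hflat := hend.of_homotopy hPc fun q' hq' => hq'.1.1
  simp only [hP0] at hflat
  refine Transport.FlatAlong.congr hflat fun q' hq' => ?_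
  exact IsVerticalTransport.unique hf hx₀ h₀ ⟨fun t => γ t + (q'.2 - q.2),
    ⟨by fun_prop, hq'.1.1⟩, by simp [hγ0], hq'.1.2, rfl⟩ (hF q' hq'.2)

end Extension

/-- An analogue of the Zariski–Lefschetz theorem: the fundamental group of a generic vertical line
surjects onto that of the complement. -/
theorem exists_flat_of_flatAlong_fiber {ι : Type*} [Finite ι] {α β : ι → ℂ} {Ω : Type*}
    {T : Transport (lineCompl α β) (Equiv.Perm Ω)} {x₀ : ℂ} (hx₀ : x₀ ∉ critical α β) {f₀ : ℂ → Ω}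
    (h₀ : T.FlatAlong (Prod.mk x₀) (fiber α β x₀) f₀) :
    ∃ F : ℂ × ℂ → Ω, T.Flat (lineCompl α β) F := by
  have := Fintype.ofFinite ι
  obtain ⟨f, hf, hf₀⟩ := exists_flat_nearInfinity T h₀
  exact exists_flat_of_extendsToFiber hf hx₀ ⟨f₀, h₀, fun y hy => (hf₀ y hy).symm⟩

/-! ### Variation of the logarithm -/

section LogVar

/-- `u` is a continuous logarithm of `g` over the unit interval. -/
def IsLog (u g : ℝ → ℂ) : Prop :=
  Continuous u ∧ ∀ t ∈ I, Complex.exp (u t) = g t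

variable {u v g h : ℝ → ℂ}

theorem exists_log_square {g : ℝ → ℝ → ℂ} (hg : Continuous fun p : ℝ × ℝ => g p.1 p.2)
    (hne : ∀ s ∈ I, ∀ t ∈ I, g s t ≠ 0) :
    ∃ U : ℝ → ℝ → ℂ, (Continuous fun p : ℝ × ℝ => U p.1 p.2) ∧
      ∀ s ∈ I, ∀ t ∈ I, Complex.exp (U s t) = g s t := by
  have hcl : Continuous fun t : ℝ => (projIcc (0 : ℝ) 1 zero_le_one t : ℝ) :=
    continuous_projIcc.subtype_val
  let f : C(ℝ × ℝ, ℂ) :=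
    ⟨fun p => g (projIcc 0 1 zero_le_one p.1) (projIcc 0 1 zero_le_one p.2),
      hg.comp ((hcl.comp continuous_fst).prodMk (hcl.comp continuous_snd))⟩
  have hf : ∀ a, f a ∈ ({0}ᶜ : Set ℂ) := fun a => hne _ (projIcc _ _ _ _).2 _ (projIcc _ _ _ _).2
  obtain ⟨F, ⟨-, hF⟩, -⟩ := Complex.isCoveringMapOn_exp.existsUnique_continuousMap_lifts f
    (a₀ := (0, 0)) (e₀ := Complex.log (f (0, 0))) (Complex.exp_log (hf _)) hf
  refine ⟨fun s t => F (s, t), F.continuous, fun s hs t ht => (congrFun hF (s, t)).trans ?_⟩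
  simp [f, projIcc_of_mem zero_le_one hs, projIcc_of_mem zero_le_one ht]

theorem exists_isLog (hg : Continuous g) (hne : ∀ t ∈ I, g t ≠ 0) : ∃ u, IsLog u g := by
  obtain ⟨U, hU, h⟩ := exists_log_square (g := fun _ => g) (by fun_prop) fun _ _ => hne
  exact ⟨U 0, hU.comp (f := fun t => ((0 : ℝ), t)) (by fun_prop), h 0 unitInterval.zero_mem⟩

theorem exists_isLog_of_apply_zero (hg : Continuous g) (hne : ∀ t ∈ I, g t ≠ 0) (h0 : g 0 = 1) :
    ∃ u, IsLog u g ∧ u 0 = 0 := by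
  obtain ⟨u, hu, hexp⟩ := exists_isLog hg hne
  refine ⟨fun t => u t - u 0, ⟨hu.sub continuous_const, fun t ht => ?_⟩, sub_self _⟩
  rw [Complex.exp_sub, hexp t ht, hexp 0 unitInterval.zero_mem, h0, div_one]

theorem IsLog.sub_eq (hu : IsLog u g) (hv : IsLog v g) {t : ℝ} (ht : t ∈ I) :
    u t - v t = u 0 - v 0 := by
  have hexp : ∀ s ∈ I, Complex.exp (u s - v s) = 1 := fun s hs => by
    rw [Complex.exp_sub, hu.2 s hs, hv.2 s hs]
    exact div_self (hu.2 s hs ▸ Complex.exp_ne_zero _)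
  exact Complex.isCoveringMap_exp.constOn_of_comp isPreconnected_Icc
    (hu.1.sub hv.1).continuousOn
    (fun s hs t ht => Subtype.ext ((hexp s hs).trans (hexp t ht).symm)) ht unitInterval.zero_mem

open Classical in
/-- The variation over the unit interval of a continuous logarithm of `g`. -/
noncomputable def logVar (g : ℝ → ℂ) : ℂ :=
  if h : ∃ u, IsLog u g then h.choose 1 - h.choose 0 else 0

theorem IsLog.logVar_eq (hu : IsLog u g) : logVar g = u 1 - u 0 := by
  have hex : ∃ u, IsLog u g := ⟨u, hu⟩
  rw [logVar, dif_pos hex]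
  linear_combination -hu.sub_eq hex.choose_spec unitInterval.one_mem

theorem isLog_const {z : ℂ} (hz : z ≠ 0) : IsLog (fun _ => Complex.log z) (fun _ => z) :=
  ⟨continuous_const, fun _ _ => Complex.exp_log hz⟩

theorem IsLog.mul (hu : IsLog u g) (hv : IsLog v h) :
    IsLog (fun t => u t + v t) (fun t => g t * h t) :=
  ⟨hu.1.add hv.1, fun t ht => by rw [Complex.exp_add, hu.2 t ht, hv.2 t ht]⟩

theorem IsLog.prod {ι : Type*} {s : Finset ι} {u g : ι → ℝ → ℂ}
    (h : ∀ i ∈ s, IsLog (u i) (g i)) : IsLog (fun t => ∑ i ∈ s, u i t) (fun t => ∏ i ∈ s, g i t) :=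
  ⟨continuous_finsetSum _ fun i hi => (h i hi).1, fun t ht => by
    rw [Complex.exp_sum]
    exact Finset.prod_congr rfl fun i hi => (h i hi).2 t ht⟩

theorem logVar_mul (hg : Curve {0}ᶜ g) (hh : Curve {0}ᶜ h) :
    logVar (fun t => g t * h t) = logVar g + logVar h := by
  obtain ⟨u, hu⟩ := exists_isLog hg.1 hg.2
  obtain ⟨v, hv⟩ := exists_isLog hh.1 hh.2
  rw [(hu.mul hv).logVar_eq, hu.logVar_eq, hv.logVar_eq]
  ring

theorem logVar_const_mul {c : ℂ} (hc : c ≠ 0) (hg : Curve {0}ᶜ g) :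
    logVar (fun t => c * g t) = logVar g := by
  rw [logVar_mul ⟨continuous_const, fun _ _ => hc⟩ hg, (isLog_const hc).logVar_eq, sub_self,
    zero_add]

theorem logVar_prod {ι : Type*} {s : Finset ι} {g : ι → ℝ → ℂ} (hg : ∀ i ∈ s, Curve {0}ᶜ (g i)) :
    logVar (fun t => ∏ i ∈ s, g i t) = ∑ i ∈ s, logVar (g i) := by
  choose! u hu using fun i hi => exists_isLog (hg i hi).1 (hg i hi).2
  rw [(IsLog.prod hu).logVar_eq, ← Finset.sum_sub_distrib]
  exact Finset.sum_congr rfl fun i hi => (hu i hi).logVar_eq.symm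

/-- The transport along a curve of a logarithm of a nonvanishing function. -/
noncomputable def logTransport {E : Type*} [TopologicalSpace E] {X : Set E} {g : E → ℂ}
    (hg : Continuous g) (hne : ∀ x ∈ X, g x ≠ 0) : Transport X (Multiplicative ℂ) where
  hol γ := Multiplicative.ofAdd (logVar fun t => g (γ t))
  hol_const x hx := by simp [(isLog_const (hne x hx)).logVar_eq]
  hol_square S hS hX := by
    obtain ⟨U, hU, h⟩ := exists_log_square (hg.comp hS) fun s hs t ht => hne _ (hX s hs t ht)
    have hrow : ∀ s ∈ I, logVar (fun t => g (S s t)) = U s 1 - U s 0 := fun s hs =>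
      IsLog.logVar_eq ⟨hU.comp (f := fun t => (s, t)) (by fun_prop), h s hs⟩
    have hcol : ∀ t ∈ I, logVar (fun s => g (S s t)) = U 1 t - U 0 t := fun t ht =>
      IsLog.logVar_eq (u := fun s => U s t)
        ⟨hU.comp (f := fun s => (s, t)) (by fun_prop), fun s hs => h s hs t ht⟩
    rw [hrow 0 unitInterval.zero_mem, hrow 1 unitInterval.one_mem, hcol 0 unitInterval.zero_mem,
      hcol 1 unitInterval.one_mem, ← ofAdd_add, ← ofAdd_add]
    congr 1
    ring

/-- The point of the unit circle reached after `t` turns. -/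
noncomputable def turn (t : ℝ) : ℂ :=
  Complex.exp (2 * Real.pi * Complex.I * t)

@[fun_prop] theorem continuous_turn : Continuous turn := by
  unfold turn
  fun_prop

theorem turn_add (s t : ℝ) : turn (s + t) = turn s * turn t := by
  rw [turn, turn, turn, ← Complex.exp_add]
  push_cast
  ring_nf

@[simp] theorem norm_turn (t : ℝ) : ‖turn t‖ = 1 := by
  simp [turn, Complex.norm_exp]

theorem turn_ne_zero (t : ℝ) : turn t ≠ 0 :=
  Complex.exp_ne_zero _

@[simp] theorem turn_zero : turn 0 = 1 := by simp [turn]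

@[simp] theorem turn_one : turn 1 = 1 := by simp [turn, Complex.exp_two_pi_mul_I]

theorem isLog_turn_mul_add {z : ℂ} (hh : Continuous h) (hz : ∀ t, ‖h t‖ < ‖z‖) (k : ℝ) :
    IsLog (fun t => 2 * Real.pi * Complex.I * ↑(t * k) + Complex.log z + Complex.log (1 + h t / z))
      (fun t => turn (t * k) * (z + h t)) := by
  have hz0 : z ≠ 0 := norm_pos_iff.1 ((norm_nonneg _).trans_lt (hz 0))
  have hslit : ∀ t, 1 + h t / z ∈ Complex.slitPlane := fun t =>
    Complex.mem_slitPlane_of_norm_lt_one (by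
      rw [norm_div, div_lt_one (norm_pos_iff.2 hz0)]
      exact hz t)
  refine ⟨((by fun_prop : Continuous fun t : ℝ => 2 * (Real.pi : ℂ) * Complex.I * ↑(t * k)).add
    continuous_const).add (((hh.div_const z).const_add 1).clog hslit), fun t _ => ?_⟩
  rw [Complex.exp_add, Complex.exp_add, Complex.exp_log hz0,
    Complex.exp_log (Complex.slitPlane_ne_zero (hslit t)), mul_assoc, mul_add, mul_one,
    mul_div_cancel₀ _ hz0]
  rfl

/-- `g` is a curve in `ℂ ∖ {0}` along which the logarithm increases by `k` full turns. -/
def Winds (g : ℝ → ℂ) (k : ℝ) : Prop :=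
  Curve {0}ᶜ g ∧ logVar g = 2 * Real.pi * Complex.I * k

theorem Winds.turn_mul_add {z : ℂ} (hh : Continuous h) (hz : ∀ t, ‖h t‖ < ‖z‖) (h01 : h 1 = h 0)
    (k : ℝ) : Winds (fun t => turn (t * k) * (z + h t)) k := by
  refine ⟨⟨by fun_prop, fun t _ => mul_ne_zero (turn_ne_zero _) fun h0 => (hz t).ne ?_⟩, ?_⟩
  · rw [eq_neg_of_add_eq_zero_right h0, norm_neg]
  · rw [(isLog_turn_mul_add hh hz k).logVar_eq, h01]
    push_cast
    ring

theorem Winds.const_mul {c : ℂ} (hc : c ≠ 0) {k : ℝ} (hg : Winds g k) :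
    Winds (fun t => c * g t) k :=
  ⟨⟨continuous_const.mul hg.1.1, fun t ht => mul_ne_zero hc (hg.1.2 t ht)⟩,
    (logVar_const_mul hc hg.1).trans hg.2⟩

theorem Winds.prod {ι : Type*} {s : Finset ι} {g : ι → ℝ → ℂ} {k : ι → ℝ}
    (hg : ∀ i ∈ s, Winds (g i) (k i)) : Winds (fun t => ∏ i ∈ s, g i t) (∑ i ∈ s, k i) :=
  ⟨⟨continuous_finsetProd _ fun i hi => (hg i hi).1.1,
    fun t ht => Finset.prod_ne_zero_iff.2 fun i hi => (hg i hi).1.2 t ht⟩, by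
    rw [logVar_prod fun i hi => (hg i hi).1, Finset.sum_congr rfl fun i hi => (hg i hi).2]
    push_cast
    rw [Finset.mul_sum]⟩

end LogVar

/-! ### Flat sections for a nontrivial monodromy character -/

section Nontrivial

variable {ι : Type*} {α β : ι → ℂ}

variable (α β) in
/-- Over `x₀` the lines form well separated clusters of radius `R`, one for each slope. -/
structure ClusterOver (x₀ : ℂ) (R : ℝ) : Prop where
  norm_lt : ∀ i, ‖β i‖ < R
  lt_norm : ∀ i k, α i ≠ α k → 5 * R < ‖(α i - α k) * x₀‖

variable {x₀ y : ℂ} {R : ℝ}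

theorem ClusterOver.norm_sub_lt (hx₀ : ClusterOver α β x₀ R) {i k : ι} (hik : α k ≠ α i)
    (hy : ‖y - α i * x₀‖ < 2 * R) {c : ℂ} (hc : ‖c‖ < R) :
    ‖c - β k‖ < ‖y - α k * x₀ - c‖ := by
  have hcβ := norm_sub_le c (β k)
  have hdiff : (α k - α i) * x₀ = y - α i * x₀ - c - (y - α k * x₀ - c) := by ring
  have hsep := hx₀.lt_norm k i hik
  rw [hdiff] at hsep
  linarith [norm_sub_le (y - α i * x₀ - c) (y - α k * x₀ - c), norm_sub_le (y - α i * x₀) c,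
    hx₀.norm_lt k]

theorem ClusterOver.slope_eq (hx₀ : ClusterOver α β x₀ R) {i k : ι}
    (hi : ‖y - α i * x₀‖ < 2 * R) (hk : ‖y - α k * x₀‖ < 2 * R) : α i = α k := by
  by_contra hik
  have hdiff : (α i - α k) * x₀ = y - α k * x₀ - (y - α i * x₀) := by ring
  have hsep := hx₀.lt_norm i k hik
  rw [hdiff] at hsep
  linarith [norm_sub_le (y - α k * x₀) (y - α i * x₀), norm_nonneg (β i), hx₀.norm_lt i]

theorem ClusterOver.notMem_critical (hx₀ : ClusterOver α β x₀ R)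
    (hd : ∀ i k, i ≠ k → α i = α k → β i ≠ β k) : x₀ ∉ critical α β := by
  rintro ⟨i, k, hik, h⟩
  by_cases hα : α i = α k
  · rw [hα] at h
    exact hd i k hik hα (add_left_cancel h)
  · have hdiff : (α i - α k) * x₀ = β k - β i := by linear_combination h
    have hsep := hx₀.lt_norm i k hα
    rw [hdiff] at hsep
    linarith [norm_sub_le (β k) (β i), hx₀.norm_lt i, hx₀.norm_lt k, norm_nonneg (β i)]

variable (α β) in
theorem exists_clusterOver [Finite ι] : ∃ x₀ R, ClusterOver α β x₀ R := by
  have := Fintype.ofFinite ι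
  let R := 1 + ∑ i, ‖β i‖
  let S := ∑ p : ι × ι, 5 * R / ‖α p.1 - α p.2‖
  refine ⟨(1 + S : ℝ), R, fun i => ?_, fun i k hik => ?_⟩
  · have := Finset.single_le_sum (f := fun i => ‖β i‖) (fun i _ => norm_nonneg (β i))
      (Finset.mem_univ i)
    exact lt_of_le_of_lt this (lt_one_add _)
  · have hpos : 0 < ‖α i - α k‖ := norm_pos_iff.2 (sub_ne_zero.2 hik)
    have hle : 5 * R / ‖α i - α k‖ ≤ S :=
      Finset.single_le_sum (f := fun p : ι × ι => 5 * R / ‖α p.1 - α p.2‖)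
        (fun p _ => by positivity) (Finset.mem_univ (i, k))
    rw [norm_mul, Complex.norm_real, Real.norm_of_nonneg (by positivity), ← div_lt_iff₀' hpos]
    exact hle.trans_lt (lt_one_add S)

/-- The loop based at `(x₀, y)` which rotates about the point `(0, c)`. -/
noncomputable def scaleLoop (x₀ c y : ℂ) (t : ℝ) : ℂ × ℂ :=
  (turn t * x₀, c + turn t * (y - c))

theorem continuous_scaleLoop (x₀ : ℂ) :
    Continuous fun p : ℂ × ℂ × ℝ => scaleLoop x₀ p.1 p.2.1 p.2.2 := by
  unfold scaleLoop
  fun_prop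

theorem turn_mul_turn_neg_mul (t : ℝ) (z : ℂ) : turn t * (turn (-t) * z) = z := by
  rw [← mul_assoc, ← turn_add, add_neg_cancel, turn_zero, one_mul]

theorem turn_neg_one : turn (-1) = 1 := by
  simpa using turn_mul_turn_neg_mul 1 1

theorem Winds.turn_mul_add_const {z w : ℂ} (h : ‖w‖ < ‖z‖) :
    Winds (fun t => turn t * z + w) 1 := by
  have hw := Winds.turn_mul_add (h := fun t => turn (-t) * w) (z := z) (by fun_prop)
    (by simpa using h) (by simp [turn_neg_one]) 1
  simpa only [mul_one, mul_add, turn_mul_turn_neg_mul] using hw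

theorem winds_scaleLoop {c : ℂ} {k : ι} (h : ‖c - β k‖ < ‖y - α k * x₀ - c‖) :
    Winds (fun t => (scaleLoop x₀ c y t).2 - (α k * (scaleLoop x₀ c y t).1 + β k)) 1 := by
  convert Winds.turn_mul_add_const h using 2 with t
  simp only [scaleLoop]
  ring

/-- The loop based at `(x₀, y)` which moves along lines of slope `a`. -/
noncomputable def shearLoop (x₀ a y : ℂ) (t : ℝ) : ℂ × ℂ :=
  (turn t * x₀, y - a * x₀ + a * (turn t * x₀))

theorem winds_shearLoop {a : ℂ} {k : ι} (h : ‖y - a * x₀ - β k‖ < ‖(a - α k) * x₀‖) :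
    Winds (fun t => (shearLoop x₀ a y t).2 - (α k * (shearLoop x₀ a y t).1 + β k)) 1 := by
  convert Winds.turn_mul_add_const h using 2 with t
  simp only [shearLoop]
  ring

theorem winds_shearLoop_of_parallel {k : ι} (h : y ∈ fiber α β x₀) :
    Winds (fun t => (shearLoop x₀ (α k) y t).2 - (α k * (shearLoop x₀ (α k) y t).1 + β k)) 0 := by
  have hne : y - α k * x₀ - β k ≠ 0 := fun h0 => h k (by linear_combination h0)
  have hconst := Winds.turn_mul_add (h := fun _ => 0) continuous_const (by simpa using hne) rfl 0
  convert hconst using 2 with t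
  simp only [shearLoop, mul_zero, turn_zero]
  ring

theorem scaleLoop_shearLoop_torus (hx₀ : ClusterOver α β x₀ R) {i : ι}
    (hR : R < ‖y - α i * x₀‖) (hi : ‖y - α i * x₀‖ < 2 * R) (s t : ℝ) :
    (turn (s + t) * x₀, turn s * (y - α i * x₀) + α i * (turn (s + t) * x₀)) ∈ lineCompl α β := by
  intro k hk
  have hβ := hx₀.norm_lt k
  by_cases hik : α i = α k
  · have hw : turn s * (y - α i * x₀) = β k := by
      rw [← hik] at hk
      linear_combination hk
    have hnorm := congrArg norm hw
    rw [norm_mul, norm_turn, one_mul] at hnorm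
    linarith
  · have hw : turn (s + t) * ((α i - α k) * x₀) = β k - turn s * (y - α i * x₀) := by
      linear_combination hk
    have hnorm := (congrArg norm hw).trans_le (norm_sub_le _ _)
    rw [norm_mul, norm_mul (turn s), norm_turn, norm_turn, one_mul, one_mul] at hnorm
    linarith [hx₀.lt_norm i k hik]

theorem hol_scaleLoop_mul_hol_shearLoop (hx₀ : ClusterOver α β x₀ R) {i : ι}
    (hR : R < ‖y - α i * x₀‖) (hi : ‖y - α i * x₀‖ < 2 * R) {G : Type*} [Group G]
    (T : Transport (lineCompl α β) G) :
    T.hol (scaleLoop x₀ 0 y) * T.hol (shearLoop x₀ (α i) y) =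
      T.hol (shearLoop x₀ (α i) y) * T.hol (scaleLoop x₀ 0 y) := by
  have hsq := T.hol_square
    (fun s t => (turn (s + t) * x₀, turn s * (y - α i * x₀) + α i * (turn (s + t) * x₀)))
    (by fun_prop) fun s _ t _ => scaleLoop_shearLoop_torus hx₀ hR hi s t
  have hscale : ∀ t, turn t = 1 →
      (fun s => (turn (s + t) * x₀, turn s * (y - α i * x₀) + α i * (turn (s + t) * x₀))) =
        scaleLoop x₀ 0 y := fun t ht => funext fun s => by
    rw [turn_add, ht, scaleLoop]
    ext <;> ring
  have hshear : ∀ s, turn s = 1 →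
      (fun t => (turn (s + t) * x₀, turn s * (y - α i * x₀) + α i * (turn (s + t) * x₀))) =
        shearLoop x₀ (α i) y := fun s hs => funext fun t => by
    rw [turn_add, hs, shearLoop]
    ext <;> ring
  rwa [hscale 0 turn_zero, hscale 1 turn_one, hshear 0 turn_zero, hshear 1 turn_one] at hsq

theorem hol_scaleLoop_eq (hx₀ : ClusterOver α β x₀ R) {i : ι} (hi : ∀ k, α k = α i → k = i)
    (hR : R < ‖y - α i * x₀‖) (hiR : ‖y - α i * x₀‖ < 2 * R) {G : Type*} [Group G]
    (T : Transport (lineCompl α β) G) :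
    T.hol (scaleLoop x₀ 0 y) = T.hol (scaleLoop x₀ (β i) y) := by
  have h := T.hol_eq_of_homotopy (S := fun s => scaleLoop x₀ (s * β i) y) (x := (x₀, y))
    (y := (x₀, y)) ((continuous_scaleLoop x₀).comp
      (f := fun p : ℝ × ℝ => ((p.1 : ℂ) * β i, y, p.2)) (by fun_prop)) (fun s hs t ht k => ?_)
    (fun s => by simp [scaleLoop]) (fun s => by simp [scaleLoop])
  · simpa using h
  refine sub_ne_zero.1 ((winds_scaleLoop ?_).1.2 t ht)
  have hβi := hx₀.norm_lt i
  have hs0 : ‖(s : ℂ) * β i‖ = s * ‖β i‖ := by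
    rw [norm_mul, Complex.norm_real, Real.norm_of_nonneg hs.1]
  by_cases hki : k = i
  · subst hki
    have h1 : ‖(s : ℂ) * β k - β k‖ = (1 - s) * ‖β k‖ := by
      rw [← sub_one_mul, norm_mul, ← Complex.ofReal_one, ← Complex.ofReal_sub, Complex.norm_real,
        norm_sub_rev, Real.norm_of_nonneg (sub_nonneg.2 hs.2)]
    linarith [norm_sub_norm_le (y - α k * x₀) (s * β k)]
  · exact hx₀.norm_sub_lt (fun h => hki (hi k h)) hiR
      (by rw [hs0]; nlinarith [hs.2, norm_nonneg (β i)])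

open Classical in
variable (α β x₀) in
/-- The loop based at `(x₀, y)` around the cluster of lines which are parallel to the `i`-th. For a
single line this loop winds around all the lines, so that it has the same monodromy factor as the
loop about vertical infinity. -/
noncomputable def clusterLoop (i : ι) (y : ℂ) : ℝ → ℂ × ℂ :=
  if ∀ k, α k = α i → k = i then scaleLoop x₀ (β i) y else shearLoop x₀ (α i) y

theorem continuous_clusterLoop (i : ι) :
    Continuous fun p : ℂ × ℝ => clusterLoop α β x₀ i p.1 p.2 := by
  unfold clusterLoop
  split_ifs
  · unfold scaleLoop
    fun_prop
  · unfold shearLoop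
    fun_prop

theorem clusterLoop_eq_base (i : ι) (y : ℂ) {t : ℝ} (ht : turn t = 1) :
    clusterLoop α β x₀ i y t = (x₀, y) := by
  unfold clusterLoop
  split_ifs <;> simp [scaleLoop, shearLoop, ht]

theorem clusterLoop_congr {i k : ι} (h : α i = α k) :
    clusterLoop α β x₀ i = clusterLoop α β x₀ k := by
  funext y
  by_cases hi : ∀ l, α l = α i → l = i
  · rw [hi k h.symm]
  · have hk : ¬ ∀ l, α l = α k → l = k := fun hk => hi (hk i h ▸ hk)
    rw [clusterLoop, clusterLoop, if_neg hi, if_neg hk, h]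

open Classical in
theorem winds_clusterLoop (hx₀ : ClusterOver α β x₀ R) {i : ι} (hy : y ∈ fiber α β x₀)
    (hi : ‖y - α i * x₀‖ < 2 * R) (k : ι) :
    Winds (fun t => (clusterLoop α β x₀ i y t).2 - (α k * (clusterLoop α β x₀ i y t).1 + β k))
      (if ∀ l, α l = α i → l = i then 1 else if α k = α i then 0 else 1) := by
  unfold clusterLoop
  by_cases hsimple : ∀ l, α l = α i → l = i
  · rw [if_pos hsimple, if_pos hsimple]
    refine winds_scaleLoop ?_
    by_cases hki : α k = α i
    · have hne : y - α k * x₀ - β k ≠ 0 := fun h => hy k (by linear_combination h)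
      rw [← hsimple k hki, sub_self, norm_zero]
      exact norm_pos_iff.2 hne
    · exact hx₀.norm_sub_lt hki hi (hx₀.norm_lt i)
  · rw [if_neg hsimple, if_neg hsimple]
    by_cases hki : α k = α i
    · rw [if_pos hki, ← hki]
      exact winds_shearLoop_of_parallel hy
    · rw [if_neg hki]
      exact winds_shearLoop (by
        linarith [norm_sub_le (y - α i * x₀) (β k), hx₀.norm_lt k,
          hx₀.lt_norm i k (Ne.symm hki), norm_nonneg (β k)])

variable [Fintype ι] {κ : ℂ} {T : Transport (lineCompl α β) (Equiv.Perm ℂ)}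

/-- The affine local system `T` has as linear part the rank one local system of the multivalued
function `(∏ i, (y - α i * x - β i)) ^ κ`. -/
def AffineOfExponent (T : Transport (lineCompl α β) (Equiv.Perm ℂ)) (κ : ℂ) : Prop :=
  ∀ γ, Curve (lineCompl α β) γ → ∀ c, T.hol γ c = T.hol γ 0 +
    Complex.exp (κ * logVar fun t => ∏ i, ((γ t).2 - (α i * (γ t).1 + β i))) * c

theorem AffineOfExponent.existsUnique_fixed (hT : AffineOfExponent T κ) {γ : ℝ → ℂ × ℂ}
    (hγ : Continuous γ) {k : ι → ℝ}
    (hk : ∀ i, Winds (fun t => (γ t).2 - (α i * (γ t).1 + β i)) (k i))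
    (hne : Complex.exp (κ * (2 * Real.pi * Complex.I * ∑ i, k i)) ≠ 1) :
    ∃! c, T.hol γ c = c := by
  have hγX : Curve (lineCompl α β) γ := ⟨hγ, fun t ht i => sub_ne_zero.1 ((hk i).1.2 t ht)⟩
  have haff := hT γ hγX
  rw [(Winds.prod fun i (_ : i ∈ Finset.univ) => hk i).2] at haff
  set χ := Complex.exp (κ * (2 * Real.pi * Complex.I * ↑(∑ i, k i)))
  have hne' : 1 - χ ≠ 0 := sub_ne_zero.2 hne.symm
  refine ⟨T.hol γ 0 / (1 - χ), ?_, fun c hc => ?_⟩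
  · dsimp only
    rw [haff]
    field_simp
    ring
  · rw [eq_div_iff hne']
    linear_combination haff c - hc

variable (hT : AffineOfExponent T κ) (hx₀ : ClusterOver α β x₀ R)
  (hinf : Complex.exp (κ * (2 * Real.pi * Complex.I * Fintype.card ι)) ≠ 1)
include hT hx₀ hinf

theorem existsUnique_fixed_scaleLoop (hy : ∀ i, R < ‖y - α i * x₀‖) :
    ∃! c, T.hol (scaleLoop x₀ 0 y) c = c :=
  hT.existsUnique_fixed (by unfold scaleLoop; fun_prop)
    (fun i => winds_scaleLoop (by simpa using (hx₀.norm_lt i).trans (hy i)))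
    (by simpa using hinf)

theorem clusterLoop_fixed {i : ι} (hy : ∀ k, R < ‖y - α k * x₀‖) (hi : ‖y - α i * x₀‖ < 2 * R)
    {c : ℂ} (hc : T.hol (scaleLoop x₀ 0 y) c = c) : T.hol (clusterLoop α β x₀ i y) c = c := by
  unfold clusterLoop
  split_ifs with hsimple
  · rwa [← hol_scaleLoop_eq hx₀ hsimple (hy i) hi]
  · refine (existsUnique_fixed_scaleLoop hT hx₀ hinf hy).unique ?_ hc
    rw [← Equiv.Perm.mul_apply, hol_scaleLoop_mul_hol_shearLoop hx₀ (hy i) hi,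
      Equiv.Perm.mul_apply, hc]

variable (hcls : ∀ i, (∀ k, α k = α i → k = i) ∨
  Complex.exp (κ * (2 * Real.pi * Complex.I * ({k | α k ≠ α i} : Finset ι).card)) ≠ 1)
include hcls

theorem existsUnique_fixed_clusterLoop {i : ι} (hy : y ∈ fiber α β x₀)
    (hi : ‖y - α i * x₀‖ < 2 * R) : ∃! c, T.hol (clusterLoop α β x₀ i y) c = c := by
  classical
  refine hT.existsUnique_fixed ((continuous_clusterLoop i).comp (by fun_prop :
    Continuous fun t : ℝ => (y, t))) (winds_clusterLoop hx₀ hy hi) ?_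
  by_cases hsimple : ∀ l, α l = α i → l = i
  · simp only [if_pos hsimple]
    simpa using hinf
  · have h := (hcls i).resolve_left hsimple
    simp only [if_neg hsimple]
    simpa [Finset.sum_ite] using h

theorem exists_flatAlong_fiber_of_clusterOver :
    ∃ f : ℂ → ℂ, T.FlatAlong (Prod.mk x₀) (fiber α β x₀) f := by
  let U : Option ι → Set ℂ := fun a =>
    a.elim {y | ∀ i, R < ‖y - α i * x₀‖} fun i => {y | ‖y - α i * x₀‖ < 2 * R}
  let P : Option ι → ℂ → ℝ → ℂ × ℂ := fun a => a.elim (scaleLoop x₀ 0) (clusterLoop α β x₀)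
  have hfix : ∀ a, ∀ y ∈ U a ∩ fiber α β x₀, ∃! c, T.hol (P a y) c = c := by
    rintro (_ | i) y ⟨hyU, hy⟩
    · exact existsUnique_fixed_scaleLoop hT hx₀ hinf hyU
    · exact existsUnique_fixed_clusterLoop hT hx₀ hinf hcls hy hyU
  have hbase : ∀ a y t, turn t = 1 → P a y t = (x₀, y) := by
    rintro (_ | i) y t ht
    · simp [P, scaleLoop, ht]
    · exact clusterLoop_eq_base i y ht
  refine T.exists_flatAlong_of_loops (U := U) (P := P) (by fun_prop) (fun _ hy => hy) ?_
    (fun y _ => ?_) ?_ (fun a y => hbase a y 0 turn_zero) (fun a y => hbase a y 1 turn_one) ?_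
    hfix ?_
  · rintro (_ | i)
    · simp only [U, Option.elim_none, ofPred_forall]
      exact isOpen_iInter_of_finite fun i => isOpen_lt (by fun_prop) (by fun_prop)
    · exact isOpen_lt (by fun_prop) (by fun_prop)
  · by_cases hy : ∀ i, R < ‖y - α i * x₀‖
    · exact ⟨none, hy⟩
    · push Not at hy
      obtain ⟨i, hi⟩ := hy
      refine ⟨some i, hi.trans_lt ?_⟩
      linarith [norm_nonneg (β i), hx₀.norm_lt i]
  · rintro (_ | i)
    · exact (continuous_scaleLoop x₀).comp
        (by fun_prop : Continuous fun p : ℂ × ℝ => ((0 : ℂ), p))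
    · exact continuous_clusterLoop i
  · rintro (_ | i) y ⟨hyU, hy⟩ t ht k
    · exact sub_ne_zero.1 ((winds_scaleLoop (c := 0) (by
        simpa using (hx₀.norm_lt k).trans (hyU k))).1.2 t ht)
    · exact sub_ne_zero.1 ((winds_clusterLoop hx₀ hy hyU k).1.2 t ht)
  · rintro (_ | i) (_ | k) y hy hya hyb c hc
    · exact hc
    · exact clusterLoop_fixed hT hx₀ hinf hya hyb hc
    · obtain ⟨c', hc', -⟩ := existsUnique_fixed_scaleLoop hT hx₀ hinf hyb
      have heq := (hfix (some i) y ⟨hya, hy⟩).unique hc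
        (clusterLoop_fixed hT hx₀ hinf hyb hya hc')
      rwa [heq]
    · have hslope : α i = α k := hx₀.slope_eq hya hyb
      simpa only [P, Option.elim_some, clusterLoop_congr hslope] using hc

omit hx₀ in
theorem exists_flat_of_exponent (hd : ∀ i k, i ≠ k → α i = α k → β i ≠ β k) :
    ∃ f : ℂ × ℂ → ℂ, T.Flat (lineCompl α β) f := by
  obtain ⟨x₀, R, hx₀⟩ := exists_clusterOver α β
  obtain ⟨f, hf⟩ := exists_flatAlong_fiber_of_clusterOver hT hx₀ hinf hcls
  exact exists_flat_of_flatAlong_fiber (hx₀.notMem_critical hd) hf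

end Nontrivial

/-! ### Flat sections for unipotent monodromy -/

section Punctured

variable {E Ω : Type*} [TopologicalSpace E] {X : Set E} {T : Transport X (Equiv.Perm Ω)}
  {j : ℂ → E} {K W : Set ℂ} {s : ℂ}

/-- A flat section over a punctured plane region may be constructed in the logarithmic
coordinate `z ↦ s + exp z`, provided that it is periodic. -/
theorem flatAlong_log (hj : Continuous j) (hWX : MapsTo j W X) (hs : s ∉ W) {f : ℂ → Ω}
    (hf : T.FlatAlong (fun z => j (s + Complex.exp z)) {z | s + Complex.exp z ∈ W} f)
    (hper : Function.Periodic f (2 * Real.pi * Complex.I)) :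
    T.FlatAlong j W fun y => f (Complex.log (y - s)) := by
  intro γ hγ
  have hγc := hγ.1
  have hne : ∀ t ∈ I, γ t - s ≠ 0 := fun t ht h => hs (sub_eq_zero.1 h ▸ hγ.2 t ht)
  obtain ⟨u, hu⟩ := exists_isLog (by fun_prop) hne
  have hlift : ∀ t ∈ I, s + Complex.exp (u t) = γ t := fun t ht => by
    rw [hu.2 t ht, add_sub_cancel]
  have hbranch : ∀ t ∈ I, f (Complex.log (γ t - s)) = f (u t) := fun t ht => by
    obtain ⟨n, hn⟩ := Complex.exp_eq_exp_iff_exists_int.1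
      ((Complex.exp_log (hne t ht)).trans (hu.2 t ht).symm)
    rw [hn, hper.int_mul n]
  have huc := hu.1
  beta_reduce
  rw [hbranch 1 unitInterval.one_mem, hbranch 0 unitInterval.zero_mem,
    ← hf u ⟨huc, fun t ht => by simpa only [mem_ofPred_eq, hlift t ht] using hγ.2 t ht⟩]
  refine congrArg (fun g : Equiv.Perm Ω => g _) (T.hol_congr (X := X)
    ⟨by fun_prop, fun t ht => hWX (hγ.2 t ht)⟩ (by fun_prop) fun t ht => ?_)
  exact congrArg j (hlift t ht).symm

theorem exists_flatAlong_of_starConvex [Nonempty Ω] (hj : Continuous j) (hK : StarConvex ℝ s K)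
    (hX : MapsTo j K X) : ∃ f, T.FlatAlong j K f := by
  obtain ⟨ω⟩ := ‹Nonempty Ω›
  have h := Transport.flatAlong_of_contraction (T := T) (W := K) (x := j s)
    (P := fun y (t : ℝ) => j (s + (1 - t) • (y - s))) (by fun_prop)
    (fun y hy t ht => hX (hK.add_smul_sub_mem hy (sub_nonneg.2 ht.2) (sub_le_self _ ht.1)))
    (fun y => by simp) ω
  exact ⟨_, by simpa using h⟩

variable {ε : ℝ}

theorem exists_flatAlong_circle (ω : Ω) (hj : Continuous j)
    (hX : ∀ t, j (s + ε * turn t) ∈ X) (hcirc : T.hol (fun t => j (s + ε * turn t)) = 1) :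
    ∃ f, T.FlatAlong (fun t : ℝ => j (s + ε * turn t)) univ f ∧ Function.Periodic f 1 := by
  let f : ℝ → Ω := fun θ => T.hol (fun t => j (s + ε * turn ((1 - t) * θ))) ω
  have hf : T.FlatAlong (fun t : ℝ => j (s + ε * turn t)) univ f := by
    have h := Transport.flatAlong_of_contraction (T := T) (W := univ) (x := j (s + ε * turn 0))
      (P := fun θ t : ℝ => j (s + ε * turn ((1 - t) * θ))) (by fun_prop) (fun θ _ t _ => hX _)
      (fun θ => by simp) ω
    simpa using h
  refine ⟨f, hf, fun θ => ?_⟩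
  have hturn : ∀ t, turn (t + 1) = turn t := fun t => by rw [turn_add, turn_one, mul_one]
  have hsq := T.hol_square (fun a t => j (s + ε * turn (a * θ + t))) (by fun_prop)
    fun _ _ _ _ => hX _
  simp only [zero_mul, one_mul, zero_add, add_zero, hturn, hcirc] at hsq
  have hflat := hf (fun t => θ + t) ⟨by fun_prop, fun _ _ => mem_univ _⟩
  rwa [mul_eq_left.1 hsq, add_zero] at hflat

theorem exp_add_mul_sub_re (z : ℂ) (t : ℝ) :
    Complex.exp (z + t * (Real.log ε - z.re)) =
      Real.exp (t * (Real.log ε - z.re)) * Complex.exp z := by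
  rw [Complex.exp_add, mul_comm]
  push_cast
  rfl

theorem radial_mem (hK : StarConvex ℝ s K) (hε : 0 < ε) {z : ℂ} (hz : s + Complex.exp z ∈ K)
    {t : ℝ} (ht : t ∈ I) :
    s + Complex.exp (z + t * (Real.log ε - z.re)) ∈ K ∪ Metric.closedBall s ε := by
  rcases le_total (Real.log ε) z.re with h | h
  · refine Or.inl ?_
    have hmem := hK.add_smul_sub_mem hz (Real.exp_pos (t * (Real.log ε - z.re))).le
      (Real.exp_le_one_iff.2 (mul_nonpos_of_nonneg_of_nonpos ht.1 (sub_nonpos.2 h)))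
    rwa [add_sub_cancel_left, Complex.real_smul, ← exp_add_mul_sub_re] at hmem
  · refine Or.inr ?_
    rw [Metric.mem_closedBall, dist_self_add_left, Complex.norm_exp, ← Real.le_log_iff_exp_le hε]
    simp
    nlinarith [ht.2]

/-- The homotopy is radial: in the logarithmic coordinate, it moves the real part to `log ε`. -/
theorem exists_flatAlong_punctured [Nonempty Ω] (hj : Continuous j) (hK : StarConvex ℝ s K)
    (hε : 0 < ε) (hX : ∀ z ∈ K ∪ Metric.closedBall s ε, z ≠ s → j z ∈ X)
    (hcirc : T.hol (fun t => j (s + ε * turn t)) = 1) : ∃ f, T.FlatAlong j (K \ {s}) f := by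
  obtain ⟨ω⟩ := ‹Nonempty Ω›
  obtain ⟨F, hF, hFper⟩ := exists_flatAlong_circle ω hj (fun t => hX _ (Or.inr (by
    simp [abs_of_pos hε])) (by simp [hε.ne', turn_ne_zero])) hcirc
  let P : ℂ → ℝ → ℂ := fun z t => s + Complex.exp (z + t * (Real.log ε - z.re))
  have hP1 : ∀ z, P z 1 = s + ε * turn (z.im / (2 * Real.pi)) := fun z => by
    have hz : z + (1 : ℝ) * (Real.log ε - z.re) = Real.log ε +
        2 * Real.pi * Complex.I * ↑(z.im / (2 * Real.pi)) := by
      conv_lhs => enter [1]; rw [← Complex.re_add_im z]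
      push_cast
      field_simp
      ring
    simp only [P]
    rw [hz, Complex.exp_add, ← Complex.ofReal_exp, Real.exp_log hε]
    rfl
  have hPX : ∀ z, s + Complex.exp z ∈ K \ {s} → ∀ t ∈ I, j (P z t) ∈ X := fun z hz t ht =>
    hX _ (radial_mem hK hε hz.1 ht) (by simp [P, Complex.exp_ne_zero])
  have hflat := Transport.FlatAlong.of_homotopy (T := T)
    (W := {z | s + Complex.exp z ∈ K \ {s}}) (P := fun z t => j (P z t))
    (f := fun z => F (z.im / (2 * Real.pi))) (by fun_prop) hPX (by
      simp only [hP1]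
      exact hF.comp (φ := fun z : ℂ => z.im / (2 * Real.pi)) (by fun_prop) fun _ _ => mem_univ _)
  have hP0 : ∀ z, P z 0 = s + Complex.exp z := fun z => by simp [P]
  have hPper : P.Periodic (2 * Real.pi * Complex.I) := fun z => funext fun t => by
    have hre : (z + 2 * Real.pi * Complex.I).re = z.re := by simp
    simp only [P, hre]
    rw [add_right_comm z, Complex.exp_periodic]
  refine ⟨_, flatAlong_log (s := s) hj (fun z hz => hX z (Or.inl hz.1) hz.2) (by simp)
    (by simpa only [hP0] using hflat) fun z => ?_⟩
  have him : (z + 2 * Real.pi * Complex.I).im / (2 * Real.pi) = z.im / (2 * Real.pi) + 1 := by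
    simp
    field_simp
  rw [hPper, him, hFper]

end Punctured

section Translation

variable {E Ω : Type*} [TopologicalSpace E] [AddCommGroup Ω] {X : Set E}
  {T : Transport X (Equiv.Perm Ω)} {j : ℂ → E}

/-- The holonomy of `T` consists of translations: `T` amounts to a cohomology class with
coefficients in `Ω`, and flat sections are its primitives. -/
def IsTranslation (T : Transport X (Equiv.Perm Ω)) : Prop :=
  ∀ γ, Curve X γ → ∀ c, T.hol γ c = T.hol γ 0 + c

theorem IsTranslation.eq_one (hT : IsTranslation T) {γ : ℝ → E} (hγ : Curve X γ)
    (h0 : T.hol γ 0 = 0) : T.hol γ = 1 :=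
  Equiv.ext fun c => by rw [hT γ hγ, h0, zero_add, Equiv.Perm.one_apply]

theorem IsTranslation.sub_flatAlong_eq (hT : IsTranslation T) (hj : Continuous j) {W : Set ℂ}
    (hW : Convex ℝ W) (hWX : MapsTo j W X) {f g : ℂ → Ω} (hf : T.FlatAlong j W f)
    (hg : T.FlatAlong j W g) {x y : ℂ} (hx : x ∈ W) (hy : y ∈ W) : f x - g x = f y - g y := by
  have hγ : Curve W (AffineMap.lineMap (k := ℝ) x y) :=
    ⟨AffineMap.lineMap_continuous, fun t ht => hW.lineMap_mem hx hy ht⟩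
  have hjγ := hT (fun t => j (AffineMap.lineMap (k := ℝ) x y t))
    ⟨hj.comp hγ.1, fun t ht => hWX (hγ.2 t ht)⟩
  have hf := hf _ hγ
  have hg := hg _ hγ
  rw [AffineMap.lineMap_apply_zero, AffineMap.lineMap_apply_one] at hf hg
  rw [← hf, ← hg, hjγ (f y), hjγ (g y)]
  abel

theorem IsTranslation.flatAlong_add_const (hT : IsTranslation T) (hj : Continuous j) {W : Set ℂ}
    (hWX : MapsTo j W X) {f : ℂ → Ω} (hf : T.FlatAlong j W f) (c : Ω) :
    T.FlatAlong j W fun z => f z + c := fun γ hγ => by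
  have hjγ := hT (fun t => j (γ t)) ⟨hj.comp hγ.1, fun t ht => hWX (hγ.2 t ht)⟩
  dsimp only
  rw [← hf γ hγ, hjγ (_ + c), hjγ (f _), add_assoc]

theorem exists_separating_strip {S : Set ℂ} (hS : S.Finite) {p q : ℂ} (hq : q ∈ S)
    (hpq : p ≠ q) : ∃ (φ : StrongDual ℝ ℂ) (b : ℝ), φ p < b ∧ b ≤ φ q ∧
      ∀ z ∈ S, φ p < φ z → b ≤ φ z := by
  obtain ⟨φ, hφ⟩ := geometric_hahn_banach_point_point (E := ℂ) hpq
  obtain ⟨z, hz, hmin⟩ := (S ∩ {z | φ p < φ z}).exists_min_image φ (hS.inter_of_left _) ⟨q, hq, hφ⟩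
  exact ⟨φ, φ z, hz.2, hmin q ⟨hq, hφ⟩, fun w hw h => hmin w ⟨hw, h⟩⟩

/-- Two half-planes with a puncture-free overlap separate two punctures. The flat sections given by
induction differ by a constant on the convex overlap. -/
theorem IsTranslation.exists_flatAlong_sdiff_finite (hT : IsTranslation T) (hj : Continuous j)
    {S : Set ℂ} (hS : S.Finite) (hX : MapsTo j Sᶜ X)
    (hcirc : ∀ s ∈ S, ∃ ε : ℝ, 0 < ε ∧ Metric.closedBall s ε ∩ S ⊆ {s} ∧
      T.hol (fun t => j (s + ε * turn t)) = 1)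
    {K : Set ℂ} (hK : Convex ℝ K) : ∃ f, T.FlatAlong j (K \ S) f := by
  induction hn : (S ∩ K).ncard using Nat.strong_induction_on generalizing K with | _ n ih
  have hfin : (S ∩ K).Finite := hS.inter_of_left K
  rcases (S ∩ K).eq_empty_or_nonempty with hempty | ⟨p, hpS, hpK⟩
  · rw [(disjoint_iff_inter_eq_empty.2 hempty).symm.sdiff_eq_left]
    rcases K.eq_empty_or_nonempty with rfl | ⟨c, hc⟩
    · exact ⟨0, fun γ hγ => absurd (hγ.2 0 unitInterval.zero_mem) (notMem_empty _)⟩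
    · exact exists_flatAlong_of_starConvex hj (hK.starConvex hc) fun z hz =>
        hX fun hzS => hempty.subset ⟨hzS, hz⟩
  by_cases hone : S ∩ K ⊆ {p}
  · obtain ⟨ε, hε, hball, hhol⟩ := hcirc p hpS
    obtain ⟨f, hf⟩ := exists_flatAlong_punctured hj (hK.starConvex hpK) hε (fun z hz hzp =>
      hX fun hzS => hzp (hz.elim (fun h => hone ⟨hzS, h⟩) fun h => hball ⟨h, hzS⟩)) hhol
    exact ⟨f, fun γ hγ => hf γ ⟨hγ.1, fun t ht => ⟨(hγ.2 t ht).1,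
      fun h => (hγ.2 t ht).2 (h ▸ hpS)⟩⟩⟩
  obtain ⟨q, ⟨hqS, hqK⟩, hqp⟩ := not_subset.1 hone
  obtain ⟨φ, b, hpb, hbq, hstrip⟩ := exists_separating_strip hS hqS (Ne.symm hqp)
  have hsmaller : ∀ U : Set ℂ, ∀ r ∈ S ∩ K, r ∉ U → (S ∩ (U ∩ K)).ncard < n :=
    fun U r hr hrU => hn ▸ ncard_lt_ncard
      ⟨fun z hz => ⟨hz.1, hz.2.2⟩, fun h => hrU (h hr).2.1⟩ hfin
  have hU : Convex ℝ {z | φ z < b} := convex_halfSpace_lt φ.isLinear _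
  have hV : Convex ℝ {z | φ p < φ z} := convex_halfSpace_gt φ.isLinear _
  obtain ⟨f, hf⟩ := ih _ (hsmaller {z | φ z < b} q ⟨hqS, hqK⟩ hbq.not_gt) (hU.inter hK) rfl
  obtain ⟨g, hg⟩ := ih _ (hsmaller {z | φ p < φ z} p ⟨hpS, hpK⟩ (lt_irrefl (φ p))) (hV.inter hK) rfl
  let W : Set ℂ := {z | φ z < b} ∩ {z | φ p < φ z} ∩ K
  have hW : W ⊆ K \ S := fun z hz => ⟨hz.2, fun hzS => hz.1.1.not_ge (hstrip z hzS hz.1.2)⟩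
  obtain ⟨c, hc⟩ : ∃ c, ∀ z ∈ W, f z = g z + c := by
    rcases W.eq_empty_or_nonempty with hempty | ⟨w, hw⟩
    · simp [hempty]
    · refine ⟨f w - g w, fun z hz => ?_⟩
      rw [← hT.sub_flatAlong_eq hj ((hU.inter hV).inter hK) (fun x hx => hX (hW hx).2)
        (Transport.FlatAlong.mono hf fun x hx => ⟨⟨hx.1.1, hx.2⟩, (hW hx).2⟩)
        (Transport.FlatAlong.mono hg fun x hx => ⟨⟨hx.1.2, hx.2⟩, (hW hx).2⟩) hz hw, add_sub_cancel]
  rw [inter_sdiff_assoc] at hf hg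
  exact T.exists_flatAlong_union hj (fun z hz => hX hz.2) (isOpen_lt φ.continuous continuous_const)
    (isOpen_lt continuous_const φ.continuous)
    (fun z _ => (lt_or_ge (φ z) b).imp id fun h => hpb.trans_le h) hf
    (hT.flatAlong_add_const hj (fun z hz => hX hz.2.2) hg c)
    fun z hz hzU hzV => hc z ⟨⟨hzU, hzV⟩, hz.1⟩

end Translation

theorem exists_isolating_radius {S : Set ℂ} (hS : S.Finite) (s : ℂ) :
    ∃ ε : ℝ, 0 < ε ∧ Metric.closedBall s ε ∩ S ⊆ {s} := by
  obtain ⟨ε, hε, h⟩ := Metric.nhds_basis_closedBall.mem_iff.1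
    ((hS.subset (sdiff_subset (t := {s}))).isClosed.isOpen_compl.mem_nhds
      fun h : s ∈ S \ {s} => h.2 rfl)
  exact ⟨ε, hε, fun z hz => by_contra fun hne => h hz.1 ⟨hz.2, hne⟩⟩

theorem norm_mul_turn {ε : ℝ} (hε : 0 < ε) (t : ℝ) : ‖(ε : ℂ) * turn t‖ = ε := by
  rw [norm_mul, norm_turn, mul_one, Complex.norm_real, Real.norm_of_nonneg hε.le]

theorem add_mul_turn_notMem {S : Set ℂ} {s : ℂ} {ε : ℝ} (hε : 0 < ε)
    (hS : Metric.closedBall s ε ∩ S ⊆ {s}) (t : ℝ) : s + ε * turn t ∉ S := fun h => by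
  have hs := hS ⟨(dist_self_add_left _ _).trans_le (norm_mul_turn hε t).le, h⟩
  rw [mem_singleton_iff, add_eq_left, ← norm_eq_zero, norm_mul_turn hε] at hs
  exact hε.ne' hs

/-- Small circles around the lines generate the first homology of the complement. -/
theorem exists_meridians {ι : Type*} [Finite ι] {α β : ι → ℂ}
    (hd : ∀ i k, i ≠ k → α i = α k → β i ≠ β k) :
    ∃ c : ι → ℝ → ℂ × ℂ, (∀ i, Curve (lineCompl α β) (c i) ∧ c i 0 = c i 1) ∧
      ∀ T : Transport (lineCompl α β) (Equiv.Perm ℂ), IsTranslation T →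
        (∀ i, T.hol (c i) 0 = 0) → ∃ f, T.Flat (lineCompl α β) f := by
  obtain ⟨x₀, R, hx₀⟩ := exists_clusterOver α β
  let p : ι → ℂ := fun i => α i * x₀ + β i
  have hfiber : fiber α β x₀ = (range p)ᶜ := by
    ext y
    simp [fiber, p, eq_comm]
  choose ε hε hball using fun i => exists_isolating_radius (finite_range p) (p i)
  have hcirc : ∀ i, Curve (lineCompl α β) fun t => (x₀, p i + ε i * turn t) := fun i =>
    ⟨by fun_prop, fun t _ => (hfiber.ge (add_mul_turn_notMem (hε i) (hball i) t) :)⟩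
  refine ⟨fun i t => (x₀, p i + ε i * turn t), fun i => ⟨hcirc i, by simp⟩, fun T hT h0 => ?_⟩
  obtain ⟨f, hf⟩ := hT.exists_flatAlong_sdiff_finite (j := Prod.mk x₀) (by fun_prop)
    (finite_range p) (fun y hy => hfiber.ge hy) (forall_mem_range.2 fun i =>
      ⟨ε i, hε i, hball i, hT.eq_one (hcirc i) (h0 i)⟩) convex_univ
  rw [← compl_eq_univ_sdiff, ← hfiber] at hf
  exact exists_flat_of_flatAlong_fiber (hx₀.notMem_critical hd) hf

/-! ### The universal abelian transport -/

section PathClass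

variable {X : Type*} [TopologicalSpace X] (z : X)

open Classical in
/-- The class of a path in the abelianised fundamental group at `z`, obtained by joining its ends
to `z`. The choice made for each end ensures functoriality; paths outside the path component
of `z` have class `1`. -/
noncomputable def pathClass {x y : X} (p : Path.Homotopic.Quotient x y) :
    Abelianization (FundamentalGroup X z) :=
  if h : Joined z x ∧ Joined z y then
    Abelianization.of (FundamentalGroup.fromPath
      (((Path.Homotopic.Quotient.mk h.1.somePath).trans p).trans
        (Path.Homotopic.Quotient.mk h.2.somePath).symm))
  else 1

theorem pathClass_trans {x y w : X} (p : Path.Homotopic.Quotient x y)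
    (q : Path.Homotopic.Quotient y w) :
    pathClass z (p.trans q) = pathClass z p * pathClass z q := by
  induction p with | mk p =>
  induction q with | mk q =>
  by_cases hx : Joined z x
  · have hy : Joined z y := hx.trans ⟨p⟩
    have hw : Joined z w := hy.trans ⟨q⟩
    simp only [pathClass, hx, hy, hw, and_self, dite_true]
    rw [mul_comm, ← map_mul, FundamentalGroup.mul_def]
    simp only [Path.Homotopic.Quotient.trans_assoc]
    rw [← Path.Homotopic.Quotient.trans_assoc (Path.Homotopic.Quotient.symm _),
      Path.Homotopic.Quotient.symm_trans, Path.Homotopic.Quotient.refl_trans]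
  · have hy : ¬ Joined z y := fun h => hx (h.trans ⟨p.symm⟩)
    simp [pathClass, hx, hy]

theorem pathClass_refl (x : X) : pathClass z (Path.Homotopic.Quotient.refl x) = 1 := by
  have h := pathClass_trans z (Path.Homotopic.Quotient.refl x) (Path.Homotopic.Quotient.refl x)
  rw [Path.Homotopic.Quotient.refl_trans] at h
  exact left_eq_mul.1 h

theorem pathClass_loop (p : Path.Homotopic.Quotient z z) :
    pathClass z p = Abelianization.of (FundamentalGroup.fromPath p) := by
  have hz : Joined z z := Joined.refl z
  let c : FundamentalGroup X z :=
    FundamentalGroup.fromPath (Path.Homotopic.Quotient.mk hz.somePath)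
  have hconj : pathClass z p =
      Abelianization.of (c⁻¹ * (FundamentalGroup.fromPath p * c)) := dif_pos ⟨hz, hz⟩
  rw [hconj, map_mul, map_mul, mul_comm (Abelianization.of (FundamentalGroup.fromPath p)), map_inv,
    inv_mul_cancel_left]

theorem homotopic_square (f : C(I × I, X)) :
    (Path.trans (y := f (1, 0)) ⟨⟨fun s => f (s, 0), by fun_prop⟩, rfl, rfl⟩
      ⟨⟨fun t => f (1, t), by fun_prop⟩, rfl, rfl⟩).Homotopic
    (Path.trans (y := f (0, 1)) ⟨⟨fun t => f (0, t), by fun_prop⟩, rfl, rfl⟩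
      ⟨⟨fun s => f (s, 1), by fun_prop⟩, rfl, rfl⟩) := by
  let bottom : Path ((0 : I), (0 : I)) (1, 0) := ⟨⟨fun s => (s, 0), by fun_prop⟩, rfl, rfl⟩
  let right : Path ((1 : I), (0 : I)) (1, 1) := ⟨⟨fun t => (1, t), by fun_prop⟩, rfl, rfl⟩
  let left : Path ((0 : I), (0 : I)) (0, 1) := ⟨⟨fun t => (0, t), by fun_prop⟩, rfl, rfl⟩
  let top : Path ((0 : I), (1 : I)) (1, 1) := ⟨⟨fun s => (s, 1), by fun_prop⟩, rfl, rfl⟩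
  have : ContractibleSpace I :=
    (convex_Icc (0 : ℝ) 1).contractibleSpace ⟨0, unitInterval.zero_mem⟩
  have h : (bottom.trans right).Homotopic (left.trans top) :=
    SimplyConnectedSpace.paths_homotopic _ _
  have h := h.map f
  rw [Path.map_trans, Path.map_trans] at h
  exact h

end PathClass

section Universal

variable {E : Type*} [TopologicalSpace E] {X : Set E}

/-- The path in the subspace `X` given by a curve. -/
def Curve.toPath {γ : ℝ → E} (hγ : Curve X γ) :
    Path (⟨γ 0, hγ.2 0 unitInterval.zero_mem⟩ : X) ⟨γ 1, hγ.2 1 unitInterval.one_mem⟩ where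
  toFun t := ⟨γ t, hγ.2 t t.2⟩
  continuous_toFun := (hγ.1.comp continuous_subtype_val).subtype_mk _
  source' := by simp
  target' := by simp

theorem curve_extend {x y : X} (p : Path x y) : Curve X fun t => (p.extend t : E) :=
  ⟨continuous_subtype_val.comp p.continuous_extend, fun t _ => (p.extend t).2⟩

variable (z : X)

open Classical in
/-- The tautological transport on `X`, with values in its abelianised fundamental group. -/
noncomputable def univTransport : Transport X (Abelianization (FundamentalGroup X z)) where
  hol γ := if h : Curve X γ then pathClass z (Path.Homotopic.Quotient.mk h.toPath) else 1
  hol_const x hx := by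
    rw [dif_pos ⟨continuous_const, fun _ _ => hx⟩]
    exact pathClass_refl z ⟨x, hx⟩
  hol_square S hS hX := by
    have hrow : ∀ t ∈ I, Curve X fun s => S s t := fun t ht =>
      ⟨hS.comp (f := fun s : ℝ => (s, t)) (by fun_prop), fun s hs => hX s hs t ht⟩
    have hcol : ∀ s ∈ I, Curve X fun t => S s t := fun s hs =>
      ⟨hS.comp (f := fun t : ℝ => (s, t)) (by fun_prop), fun t ht => hX s hs t ht⟩
    rw [dif_pos (hrow 0 unitInterval.zero_mem), dif_pos (hcol 1 unitInterval.one_mem),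
      dif_pos (hcol 0 unitInterval.zero_mem), dif_pos (hrow 1 unitInterval.one_mem)]
    have h := homotopic_square (X := X) ⟨fun p => ⟨S p.1 p.2, hX _ p.1.2 _ p.2.2⟩,
      (hS.comp (f := fun p : I × I => ((p.1 : ℝ), (p.2 : ℝ))) (by fun_prop)).subtype_mk _⟩
    rw [← pathClass_trans, ← pathClass_trans]
    exact congrArg (pathClass z) (Path.Homotopic.Quotient.eq.2 h)

theorem univTransport_hol_loop {γ : ℝ → E} (hγ : Curve X γ) (h0 : γ 0 = z) (h1 : γ 1 = z) :
    (univTransport z).hol γ = Abelianization.of (FundamentalGroup.fromPath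
      (Path.Homotopic.Quotient.mk
        (hγ.toPath.cast (Subtype.ext h0.symm) (Subtype.ext h1.symm)))) := by
  rw [← pathClass_loop]
  have hcast : ∀ {x y : X} (p : Path x y) (hx : z = x) (hy : z = y),
      pathClass z (Path.Homotopic.Quotient.mk p) =
        pathClass z (Path.Homotopic.Quotient.mk (p.cast hx hy)) := by
    rintro _ _ p rfl rfl
    rfl
  exact (dif_pos hγ).trans (hcast _ _ _)

theorem exists_loop_univTransport_hol_eq (g : Abelianization (FundamentalGroup X z)) :
    ∃ γ : ℝ → E, Curve X γ ∧ γ 0 = z ∧ γ 1 = z ∧ (univTransport z).hol γ = g := by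
  induction g using QuotientGroup.induction_on with | _ g
  obtain ⟨p, rfl⟩ := Path.Homotopic.Quotient.mk_surjective g
  refine ⟨_, curve_extend p, by simp, by simp, ?_⟩
  refine (univTransport_hol_loop z (curve_extend p) (by simp) (by simp)).trans ?_
  change Abelianization.of (FundamentalGroup.fromPath _) =
    Abelianization.of (FundamentalGroup.fromPath _)
  congr 3
  ext t
  simp [Curve.toPath]

/-- The transport obtained from `T` by a homomorphism of its group of values. -/
def Transport.map {G H : Type*} [Group G] [Group H] (T : Transport X G) (φ : G →* H) :
    Transport X H where
  hol γ := φ (T.hol γ)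
  hol_const x hx := by rw [T.hol_const x hx, map_one]
  hol_square S hS hX := by rw [← map_mul, T.hol_square S hS hX, map_mul]

variable {G : Type*} [CommGroup G] (T : Transport X G)

theorem Transport.hol_extend_trans {x y w : X} (p : Path x y) (q : Path y w) :
    T.hol (fun t => ((p.trans q).extend t : E)) =
      T.hol (fun t => (p.extend t : E)) * T.hol (fun t => (q.extend t : E)) := by
  have h : (p.extend 1 : E) = q.extend 0 := by simp
  rw [← T.hol_concat (curve_extend p) (curve_extend q) h]
  refine T.hol_congr (curve_extend _) ((curve_extend p).concat (curve_extend q) h).1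
    fun t ht => ?_
  simp only [Path.extend_apply _ ht, Path.trans_apply, concat]
  split_ifs <;> rw [Path.extend_apply]

/-- The homomorphism on loops at `z` induced by a transport. -/
noncomputable def Transport.monodromy : FundamentalGroup X z →* G where
  toFun := Quotient.lift (s := Path.Homotopic.setoid z z)
    (fun p : Path z z => T.hol fun t => (p.extend t : E)) (by
      rintro p q ⟨H⟩
      have h := T.hol_eq_of_homotopy (x := (z : E)) (y := z)
        (S := fun s t => (H (projIcc 0 1 zero_le_one s, projIcc 0 1 zero_le_one t) : E))
        (by fun_prop) (fun _ _ _ _ => Subtype.prop _) (by simp) (by simp)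
      simpa [Path.extend, IccExtend] using h)
  map_one' := (congrArg T.hol (funext fun _ => by simp)).trans (T.hol_const _ z.2)
  map_mul' := by
    rintro ⟨p⟩ ⟨q⟩
    rw [mul_comm]
    exact T.hol_extend_trans q p

theorem Transport.lift_monodromy_univTransport {γ : ℝ → E} (hγ : Curve X γ) (h0 : γ 0 = z)
    (h1 : γ 1 = z) :
    Abelianization.lift (T.monodromy z) ((univTransport z).hol γ) = T.hol γ := by
  rw [univTransport_hol_loop z hγ h0 h1, Abelianization.lift_apply_of]
  refine (T.hol_congr hγ (curve_extend (hγ.toPath.cast (Subtype.ext h0.symm)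
    (Subtype.ext h1.symm))).1 fun t ht => ?_).symm
  rw [Path.extend_apply _ ht]
  rfl

end Universal

/-! ### Eigencomponents of a period -/

section Period

variable {E : Type*} [TopologicalSpace E] {X : Set E}

/-- The value of a complex-valued transport on a curve, as a complex number. -/
def Transport.period (T : Transport X (Multiplicative ℂ)) (γ : ℝ → E) : ℂ :=
  (T.hol γ).toAdd

/-- The periods of `T` along closed curves vanish: the cohomology class of `T` is zero. -/
def Transport.IsExact (T : Transport X (Multiplicative ℂ)) : Prop :=
  ∀ γ, Curve X γ → γ 0 = γ 1 → T.period γ = 0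

variable (T : Transport X (Multiplicative ℂ))

theorem Transport.period_const {x : E} (hx : x ∈ X) : T.period (fun _ => x) = 0 :=
  congrArg Multiplicative.toAdd (T.hol_const x hx)

theorem Transport.period_square {S : ℝ → ℝ → E} (hS : Continuous fun p : ℝ × ℝ => S p.1 p.2)
    (hX : ∀ s ∈ I, ∀ t ∈ I, S s t ∈ X) :
    T.period (fun s => S s 0) + T.period (fun t => S 1 t) =
      T.period (fun t => S 0 t) + T.period (fun s => S s 1) :=
  congrArg Multiplicative.toAdd (T.hol_square S hS hX)

end Period

section Eigenpart

variable {V : Type*} [AddCommGroup V] [Module ℂ V] [TopologicalSpace V]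
  {X : Set V} {n : ℕ}

/-- `X` is stable under multiplication by the `n`-th roots of unity. -/
def StableUnderRoots (n : ℕ) (X : Set V) : Prop :=
  ∀ c : ℂ, c ^ n = 1 → ∀ x ∈ X, c • x ∈ X

/-- The periods of `T` are multiplied by `c⁻¹ ^ k` when a curve is multiplied by an `n`-th root of
unity `c`: the class of `T` is an eigenvector of the action of the roots of unity. -/
def Transport.IsEigen (T : Transport X (Multiplicative ℂ)) (n k : ℕ) : Prop :=
  ∀ c : ℂ, c ^ n = 1 → ∀ γ : ℝ → V, c ^ k * T.period (fun t => c • γ t) = T.period γ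

variable [ContinuousConstSMul ℂ V] [NeZero n] (T : Transport X (Multiplicative ℂ))

theorem mem_nthRootsFinset_one {ξ : ℂ} :
    ξ ∈ Polynomial.nthRootsFinset n (1 : ℂ) ↔ ξ ^ n = 1 :=
  Polynomial.mem_nthRootsFinset (NeZero.pos n) 1

/-- The projection of a transport to the `k`-th eigenspace of the action of the `n`-th roots of
unity. -/
noncomputable def Transport.eigenpart (hX : StableUnderRoots n X) (k : ℕ) :
    Transport X (Multiplicative ℂ) where
  hol γ := Multiplicative.ofAdd ((n : ℂ)⁻¹ * ∑ ξ ∈ Polynomial.nthRootsFinset n (1 : ℂ),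
    ξ ^ k * T.period fun t => ξ • γ t)
  hol_const x hx := by
    rw [Finset.sum_eq_zero, mul_zero, ofAdd_zero]
    intro ξ hξ
    rw [T.period_const (hX ξ (mem_nthRootsFinset_one.1 hξ) x hx), mul_zero]
  hol_square S hS hSX := by
    rw [← ofAdd_add, ← ofAdd_add, ← mul_add, ← mul_add, ← Finset.sum_add_distrib,
      ← Finset.sum_add_distrib]
    congr 2
    refine Finset.sum_congr rfl fun ξ hξ => ?_
    rw [← mul_add, ← mul_add, T.period_square (S := fun s t => ξ • S s t) (hS.const_smul _)
      fun s hs t ht => hX ξ (mem_nthRootsFinset_one.1 hξ) _ (hSX s hs t ht)]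

variable {hX : StableUnderRoots n X}

theorem Transport.period_eigenpart (k : ℕ) (γ : ℝ → V) :
    (T.eigenpart hX k).period γ = (n : ℂ)⁻¹ * ∑ ξ ∈ Polynomial.nthRootsFinset n (1 : ℂ),
      ξ ^ k * T.period fun t => ξ • γ t :=
  rfl

theorem Transport.isEigen_eigenpart (k : ℕ) : (T.eigenpart hX k).IsEigen n k := by
  intro c hc γ
  have hc0 : c ≠ 0 := (IsUnit.of_pow_eq_one hc (NeZero.ne n)).ne_zero
  rw [period_eigenpart, period_eigenpart, mul_left_comm, Finset.mul_sum]
  congr 1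
  refine Finset.sum_nbij' (· * c) (· / c) (fun ξ hξ => ?_) (fun ξ hξ => ?_)
    (fun ξ _ => mul_div_cancel_right₀ ξ hc0) (fun ξ _ => div_mul_cancel₀ ξ hc0) fun ξ _ => ?_
  · simp_all [mem_nthRootsFinset_one, mul_pow]
  · simp_all [mem_nthRootsFinset_one, div_pow]
  · simp only [mul_pow, smul_smul]
    ring

theorem Transport.sum_period_eigenpart (γ : ℝ → V) :
    ∑ k ∈ Finset.range n, (T.eigenpart hX k).period γ = T.period γ := by
  simp only [period_eigenpart]
  rw [← Finset.mul_sum, Finset.sum_comm]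
  simp only [← Finset.sum_mul]
  rw [Finset.sum_eq_single 1]
  · simp [NeZero.ne n]
  · intro ξ hξ h1
    rw [geom_sum_eq h1, mem_nthRootsFinset_one.1 hξ, sub_self, zero_div, zero_mul]
  · simp [mem_nthRootsFinset_one]

end Eigenpart

/-! ### The rank one local system of an eigencomponent -/

section Affine

/-- The affine permutation `c ↦ b + exp s * c` of the complex line. -/
noncomputable def affinePerm (b s : ℂ) : Equiv.Perm ℂ :=
  (Equiv.mulLeft₀ (Complex.exp s) (Complex.exp_ne_zero s)).trans (Equiv.addLeft b)

theorem affinePerm_apply (b s c : ℂ) : affinePerm b s c = b + Complex.exp s * c :=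
  rfl

theorem affinePerm_mul (b s b' s' : ℂ) :
    affinePerm b s * affinePerm b' s' = affinePerm (b + Complex.exp s * b') (s + s') := by
  ext c
  simp only [Equiv.Perm.mul_apply, affinePerm_apply, Complex.exp_add]
  ring

end Affine

section Twist

variable {V : Type*} [AddCommGroup V] [Module ℂ V] {q : V → ℂ} {n k : ℕ}

/-- The Milnor fibre of a function on a complex vector space. -/
def milnorFiber (q : V → ℂ) : Set V :=
  {z | q z = 1}

/-- `q` is homogeneous of degree `n`. -/
def IsHomogeneous (q : V → ℂ) (n : ℕ) : Prop :=
  ∀ (c : ℂ) (z : V), q (c • z) = c ^ n * q z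

theorem IsHomogeneous.stableUnderRoots (hq : IsHomogeneous q n) :
    StableUnderRoots n (milnorFiber q) := fun c hc z hz => by
  simpa only [milnorFiber, mem_ofPred_eq, hq c z, hc, one_mul] using hz

variable {Y : Type*} {X : Set Y} {G : Y → V} {γ : ℝ → Y} {u v : ℝ → ℂ}

/-- The curve `G ∘ γ` rescaled by an `n`-th root of `exp (-u)`; it lies on the Milnor fibre of a
function `q` of degree `n` if `u` is a logarithm of `q ∘ G ∘ γ`. -/
noncomputable def rescale (n : ℕ) (G : Y → V) (u : ℝ → ℂ) (γ : ℝ → Y) : ℝ → V :=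
  fun t => Complex.exp (-u t / n) • G (γ t)

theorem IsHomogeneous.rescale_mem [NeZero n] (hq : IsHomogeneous q n)
    {t : ℝ} (h : Complex.exp (u t) = q (G (γ t))) : rescale n G u γ t ∈ milnorFiber q := by
  have hn : (n : ℂ) ≠ 0 := NeZero.ne _
  rw [milnorFiber, mem_ofPred_eq, rescale, hq, ← h, ← Complex.exp_nat_mul, ← Complex.exp_add,
    mul_div_cancel₀ _ hn, neg_add_cancel, Complex.exp_zero]

variable [TopologicalSpace V]

/-- The affine map by which an eigenvector `P` acts along `γ`, given a logarithm `u` of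
`q ∘ G ∘ γ`. -/
noncomputable def affineHol (P : Transport (milnorFiber q) (Multiplicative ℂ)) (n k : ℕ)
    (G : Y → V) (u : ℝ → ℂ) (γ : ℝ → Y) : Equiv.Perm ℂ :=
  affinePerm (Complex.exp (-(k / n * u 0)) * P.period (rescale n G u γ)) (k / n * (u 1 - u 0))

variable [NeZero n] [ContinuousSMul ℂ V] [TopologicalSpace Y]
  {P : Transport (milnorFiber q) (Multiplicative ℂ)}

theorem IsHomogeneous.curve_rescale (hq : IsHomogeneous q n) (hG : Continuous G)
    (hγ : Continuous γ) (hu : IsLog u fun t => q (G (γ t))) :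
    Curve (milnorFiber q) (rescale n G u γ) := by
  have := hu.1
  exact ⟨by unfold rescale; fun_prop, fun t ht => hq.rescale_mem (hu.2 t ht)⟩

theorem affineHol_eq (hq : IsHomogeneous q n) (hG : Continuous G) (hP : P.IsEigen n k)
    (hγ : Continuous γ) (hu : IsLog u fun t => q (G (γ t)))
    (hv : IsLog v fun t => q (G (γ t))) : affineHol P n k G u γ = affineHol P n k G v γ := by
  have hn : (n : ℂ) ≠ 0 := NeZero.ne _
  have hdiff : ∀ t ∈ I, u t - v t = u 0 - v 0 := fun t ht => hu.sub_eq hv ht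
  have hexp : Complex.exp (u 0 - v 0) = 1 := by
    rw [Complex.exp_sub, hu.2 0 unitInterval.zero_mem, ← hv.2 0 unitInterval.zero_mem,
      div_self (Complex.exp_ne_zero _)]
  set c := Complex.exp (-(u 0 - v 0) / n) with hc
  have hcn : c ^ n = 1 := by
    rw [hc, ← Complex.exp_nat_mul, mul_div_cancel₀ _ hn, Complex.exp_neg, hexp, inv_one]
  have hcurve : P.period (rescale n G u γ) = P.period (fun t => c • rescale n G v γ t) := by
    refine congrArg Multiplicative.toAdd (P.hol_congr (hq.curve_rescale hG hγ hu)
      ((hq.curve_rescale hG hγ hv).1.const_smul c) fun t ht => ?_)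
    simp only [rescale, hc, smul_smul, ← Complex.exp_add]
    congr 2
    linear_combination (-1 / n : ℂ) * hdiff t ht
  unfold affineHol
  congr 1
  · rw [hcurve, ← hP c hcn (rescale n G v γ), ← mul_assoc,
      hc, ← Complex.exp_nat_mul, ← Complex.exp_add]
    congr 2
    ring
  · linear_combination (k / n : ℂ) * hdiff 1 unitInterval.one_mem

omit [ContinuousSMul ℂ V] [TopologicalSpace Y] in
theorem affineHol_const (hq : IsHomogeneous q n) {x : Y} (hx : q (G x) ≠ 0) :
    affineHol P n k G (fun _ => Complex.log (q (G x))) (fun _ => x) = 1 := by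
  have hperiod : P.period (rescale n G (fun _ => Complex.log (q (G x))) fun _ => x) = 0 :=
    P.period_const (hq.rescale_mem (u := fun _ => Complex.log (q (G x))) (γ := fun _ => x) (t := 0)
      (Complex.exp_log hx))
  ext c
  simp [affineHol, affinePerm_apply, hperiod]

theorem affineHol_square (hq : IsHomogeneous q n) (hG : Continuous G) {S : ℝ → ℝ → Y}
    (hS : Continuous fun p : ℝ × ℝ => S p.1 p.2) {U : ℝ → ℝ → ℂ}
    (hU : Continuous fun p : ℝ × ℝ => U p.1 p.2)
    (hlog : ∀ s ∈ I, ∀ t ∈ I, Complex.exp (U s t) = q (G (S s t))) :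
    affineHol P n k G (fun s => U s 0) (fun s => S s 0) *
        affineHol P n k G (fun t => U 1 t) (fun t => S 1 t) =
      affineHol P n k G (fun t => U 0 t) (fun t => S 0 t) *
        affineHol P n k G (fun s => U s 1) (fun s => S s 1) := by
  have hsq : P.period (rescale n G (fun s => U s 0) fun s => S s 0) +
      P.period (rescale n G (U 1) (S 1)) = P.period (rescale n G (U 0) (S 0)) +
        P.period (rescale n G (fun s => U s 1) fun s => S s 1) :=
    P.period_square (S := fun s t => rescale n G (U s) (S s) t) (by unfold rescale; fun_prop)
      fun s hs t ht => hq.rescale_mem (hlog s hs t ht)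
  have hright : (k / n * (U 1 0 - U 0 0) + -(k / n * U 1 0) : ℂ) = -(k / n * U 0 0) := by ring
  have htop : (k / n * (U 0 1 - U 0 0) + -(k / n * U 0 1) : ℂ) = -(k / n * U 0 0) := by ring
  simp only [affineHol, affinePerm_mul, ← mul_assoc, ← Complex.exp_add]
  rw [hright, htop]
  congr 1
  · linear_combination Complex.exp (-(k / n * U 0 0)) * hsq
  · ring

/-- A map `G` from `X` to the complement of the zeros of `q`, seen as a chart of its quotient by
rescaling, together with an eigenvector `P` for the action of the roots of unity on the
Milnor fibre, determines a local system on `X`. Its fibre is the affine complex line, and its linear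
part is the monodromy of `(q ∘ G) ^ (k / n)`. -/
structure TwistData (q : V → ℂ) (n k : ℕ) (G : Y → V) (X : Set Y)
    (P : Transport (milnorFiber q) (Multiplicative ℂ)) : Prop where
  homogeneous : IsHomogeneous q n
  continuous : Continuous q
  continuous_chart : Continuous G
  ne_zero : ∀ x ∈ X, q (G x) ≠ 0
  isEigen : P.IsEigen n k

namespace TwistData

variable (D : TwistData q n k G X P)

include D in
omit [NeZero n] [ContinuousSMul ℂ V] in
theorem exists_isLog (hγ : Curve X γ) : ∃ u, IsLog u fun t => q (G (γ t)) :=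
  Milnor.exists_isLog (D.continuous.comp (D.continuous_chart.comp hγ.1))
    fun t ht => D.ne_zero _ (hγ.2 t ht)

open Classical in
/-- The holonomy of the local system of `D`. -/
noncomputable def hol (_ : TwistData q n k G X P) (γ : ℝ → Y) : Equiv.Perm ℂ :=
  if h : ∃ u, IsLog u fun t => q (G (γ t)) then affineHol P n k G h.choose γ else 1

theorem hol_eq (hγ : Continuous γ) (hu : IsLog u fun t => q (G (γ t))) :
    D.hol γ = affineHol P n k G u γ := by
  have hex : ∃ u, IsLog u fun t => q (G (γ t)) := ⟨u, hu⟩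
  rw [hol, dif_pos hex]
  exact affineHol_eq D.homogeneous D.continuous_chart D.isEigen hγ hex.choose_spec hu

/-- The local system of `D`. -/
noncomputable def transport : Transport X (Equiv.Perm ℂ) where
  hol := D.hol
  hol_const x hx := by
    rw [D.hol_eq continuous_const (isLog_const (D.ne_zero x hx)),
      affineHol_const D.homogeneous (D.ne_zero x hx)]
  hol_square S hS hX := by
    obtain ⟨U, hU, h⟩ := exists_log_square (D.continuous.comp (D.continuous_chart.comp hS))
      fun s hs t ht => D.ne_zero _ (hX s hs t ht)
    have hrow : ∀ s ∈ I, D.hol (fun t => S s t) = affineHol P n k G (U s) (S s) := fun s hs =>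
      D.hol_eq (hS.comp (f := fun t => (s, t)) (by fun_prop))
        ⟨hU.comp (f := fun t => (s, t)) (by fun_prop), h s hs⟩
    have hcol : ∀ t ∈ I, D.hol (fun s => S s t) =
        affineHol P n k G (fun s => U s t) (fun s => S s t) := fun t ht =>
      D.hol_eq (hS.comp (f := fun s => (s, t)) (by fun_prop))
        ⟨hU.comp (f := fun s => (s, t)) (by fun_prop), fun s hs => h s hs t ht⟩
    rw [hrow 0 unitInterval.zero_mem, hrow 1 unitInterval.one_mem, hcol 0 unitInterval.zero_mem,
      hcol 1 unitInterval.one_mem]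
    exact affineHol_square D.homogeneous D.continuous_chart hS hU h

theorem transport_hol_apply (hγ : Continuous γ) (hu : IsLog u fun t => q (G (γ t))) (c : ℂ) :
    D.transport.hol γ c = Complex.exp (-(k / n * u 0)) * P.period (rescale n G u γ) +
      Complex.exp (k / n * (u 1 - u 0)) * c :=
  congrArg (fun g : Equiv.Perm ℂ => g c) (D.hol_eq hγ hu)

theorem transport_hol_eq_add (hγ : Curve X γ) (c : ℂ) :
    D.transport.hol γ c = D.transport.hol γ 0 +
      Complex.exp (k / n * logVar fun t => q (G (γ t))) * c := by
  obtain ⟨u, hu⟩ := D.exists_isLog hγ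
  rw [D.transport_hol_apply hγ.1 hu, D.transport_hol_apply hγ.1 hu, hu.logVar_eq, mul_zero,
    add_zero]

theorem period_rescale_eq_zero {f : Y → ℂ} (hf : D.transport.Flat X f) (hγ : Curve X γ)
    (h01 : γ 0 = γ 1) (hu : IsLog u fun t => q (G (γ t)))
    (hexp : Complex.exp (k / n * (u 1 - u 0)) = 1) : P.period (rescale n G u γ) = 0 := by
  have hflat := hf.apply hγ
  rw [D.transport_hol_apply hγ.1 hu, hexp, one_mul, h01, add_eq_right] at hflat
  exact (mul_eq_zero.1 hflat).resolve_left (Complex.exp_ne_zero _)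

end TwistData

end Twist

/-! ### The affine chart adapted to a line of the arrangement -/

section Chart

variable {ι : Type*} [Fintype ι] {V : Type*} [NormedAddCommGroup V] [NormedSpace ℂ V]
  {L : ι → V →L[ℂ] ℂ} {j : ι} {b : Module.Basis (Fin 3) ℂ V} {k : ℕ}

/-- The defining polynomial of the arrangement with linear forms `L`. -/
noncomputable def definingPoly (L : ι → V →L[ℂ] ℂ) (z : V) : ℂ :=
  ∏ i, L i z

@[fun_prop] theorem continuous_definingPoly : Continuous (definingPoly L) := by
  unfold definingPoly
  fun_prop

theorem isHomogeneous_definingPoly : IsHomogeneous (definingPoly L) (Fintype.card ι) :=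
  fun c z => by simp [definingPoly, Finset.prod_mul_distrib]

theorem apply_ne_zero_of_definingPoly_ne_zero {z : V} (hz : definingPoly L z ≠ 0) (i : ι) :
    L i z ≠ 0 :=
  Finset.prod_ne_zero_iff.1 hz i (Finset.mem_univ i)

/-- The basis `b` is adapted to the line `L j = 0` of the projective plane: its points `b 1`, `b 2`
lie on that line, and `b 2` lies on no other line of the arrangement. In the affine chart
`b 0 + x • b 1 + y • b 2`, the line `L j = 0` is at infinity and no other line is vertical. -/
structure Adapted (L : ι → V →L[ℂ] ℂ) (j : ι) (b : Module.Basis (Fin 3) ℂ V) : Prop where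
  apply_zero : L j (b 0) = 1
  apply_one : L j (b 1) = 0
  apply_two : L j (b 2) = 0
  apply_two_ne_zero : ∀ i, i ≠ j → L i (b 2) ≠ 0

/-- The affine chart of the projective plane defined by a basis. -/
noncomputable def chart (b : Module.Basis (Fin 3) ℂ V) (p : ℂ × ℂ) : V :=
  b 0 + p.1 • b 1 + p.2 • b 2

@[fun_prop] theorem continuous_chart : Continuous (chart b) := by
  unfold chart
  fun_prop

/-- The slope, in the chart of `b`, of a line of the arrangement other than `j`. -/
noncomputable def slope (L : ι → V →L[ℂ] ℂ) (j : ι) (b : Module.Basis (Fin 3) ℂ V)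
    (i : {i // i ≠ j}) : ℂ :=
  -L i (b 1) / L i (b 2)

/-- The ordinate at the origin, in the chart of `b`, of a line of the arrangement other than `j`. -/
noncomputable def intercept (L : ι → V →L[ℂ] ℂ) (j : ι) (b : Module.Basis (Fin 3) ℂ V)
    (i : {i // i ≠ j}) : ℂ :=
  -L i (b 0) / L i (b 2)

/-- The complement of the arrangement in the affine chart of `b`. -/
abbrev chartCompl (L : ι → V →L[ℂ] ℂ) (j : ι) (b : Module.Basis (Fin 3) ℂ V) : Set (ℂ × ℂ) :=
  lineCompl (slope L j b) (intercept L j b)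

namespace Adapted

variable (hb : Adapted L j b)
include hb

omit [Fintype ι]

theorem apply_chart_self (p : ℂ × ℂ) : L j (chart b p) = 1 := by
  simp [chart, hb.apply_zero, hb.apply_one, hb.apply_two]

theorem apply_chart (i : {i // i ≠ j}) (p : ℂ × ℂ) :
    L i (chart b p) = L i (b 2) * (p.2 - (slope L j b i * p.1 + intercept L j b i)) := by
  have := hb.apply_two_ne_zero i i.2
  simp only [chart, slope, intercept, map_add, map_smul, smul_eq_mul]
  field_simp
  ring

theorem mem_chartCompl_iff {p : ℂ × ℂ} :
    p ∈ chartCompl L j b ↔ ∀ i : {i // i ≠ j}, L i (chart b p) ≠ 0 := by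
  refine forall_congr' fun i => ?_
  rw [hb.apply_chart, mul_ne_zero_iff_left (hb.apply_two_ne_zero i i.2), sub_ne_zero]

theorem chart_coord {c : ℂ} {z : V} (hc : c * L j z = 1) :
    chart b (c * b.coord 1 z, c * b.coord 2 z) = c • z := by
  have hz : z = b.coord 0 z • b 0 + b.coord 1 z • b 1 + b.coord 2 z • b 2 := by
    conv_lhs => rw [← b.sum_repr z, Fin.sum_univ_three]
    rfl
  have h0 : L j z = b.coord 0 z := by
    conv_lhs => rw [hz]
    simp [hb.apply_zero, hb.apply_one, hb.apply_two]
  conv_rhs => rw [hz]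
  rw [chart, smul_add, smul_add, smul_smul, smul_smul, smul_smul, ← h0, hc, one_smul]

variable [Fintype ι] [DecidableEq ι]

theorem definingPoly_chart (p : ℂ × ℂ) : definingPoly L (chart b p) =
    (∏ i : {i // i ≠ j}, L i (b 2)) *
      ∏ i : {i // i ≠ j}, (p.2 - (slope L j b i * p.1 + intercept L j b i)) := by
  rw [definingPoly, ← Finset.mul_prod_erase _ _ (Finset.mem_univ j), hb.apply_chart_self, one_mul,
    ← Finset.prod_mul_distrib]
  simp only [← hb.apply_chart]
  exact Finset.prod_subtype _ (by simp) _

omit [DecidableEq ι] in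
theorem definingPoly_chart_ne_zero_iff {p : ℂ × ℂ} :
    definingPoly L (chart b p) ≠ 0 ↔ p ∈ chartCompl L j b := by
  rw [hb.mem_chartCompl_iff, definingPoly, Finset.prod_ne_zero_iff]
  refine ⟨fun h i => h i (Finset.mem_univ _), fun h i _ => ?_⟩
  rcases eq_or_ne i j with rfl | hij
  · exact hb.apply_chart_self p ▸ one_ne_zero
  · exact h ⟨i, hij⟩

variable {P : Transport (milnorFiber (definingPoly L)) (Multiplicative ℂ)}
  (hP : P.IsEigen (Fintype.card ι) k)
include hP

omit [DecidableEq ι] in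
theorem twistData :
    TwistData (definingPoly L) (Fintype.card ι) k (chart b) (chartCompl L j b) P where
  homogeneous := isHomogeneous_definingPoly
  continuous := continuous_definingPoly
  continuous_chart := continuous_chart
  ne_zero _ := hb.definingPoly_chart_ne_zero_iff.2
  isEigen := hP

variable [Nonempty ι]

theorem affineOfExponent_transport :
    AffineOfExponent (hb.twistData hP).transport (k / Fintype.card ι) := by
  intro γ hγ c
  have hc : ∏ i : {i // i ≠ j}, L i (b 2) ≠ 0 :=
    Finset.prod_ne_zero_iff.2 fun i _ => hb.apply_two_ne_zero i i.2
  have hcont := hγ.1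
  have hprod : Curve {0}ᶜ fun t => ∏ i : {i // i ≠ j},
      ((γ t).2 - (slope L j b i * (γ t).1 + intercept L j b i)) :=
    ⟨by fun_prop, fun t ht => Finset.prod_ne_zero_iff.2 fun i _ => sub_ne_zero.2 (hγ.2 t ht i)⟩
  rw [(hb.twistData hP).transport_hol_eq_add hγ]
  simp only [hb.definingPoly_chart]
  rw [logVar_const_mul hc hprod]

omit [DecidableEq ι] in
theorem isExact_of_flat {f : ℂ × ℂ → ℂ}
    (hf : (hb.twistData hP).transport.Flat (chartCompl L j b) f) : P.IsExact := by
  intro γ hγ h01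
  have : FiniteDimensional ℂ V := b.finiteDimensional_of_finite
  have hcoord : ∀ i, Continuous (b.coord i) := fun i => (b.coord i).continuous_of_finiteDimensional
  have hcont := hγ.1
  have hne : ∀ t ∈ I, L j (γ t) ≠ 0 := fun t ht =>
    apply_ne_zero_of_definingPoly_ne_zero (hγ.2 t ht ▸ one_ne_zero) j
  obtain ⟨v, hvc, hv : ∀ t ∈ I, Complex.exp (v t) = L j (γ t)⟩ :=
    exists_isLog (g := fun t => L j (γ t)) (by fun_prop) hne
  let p : ℝ → ℂ × ℂ := fun t =>
    (Complex.exp (-v t) * b.coord 1 (γ t), Complex.exp (-v t) * b.coord 2 (γ t))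
  have hchart : ∀ t ∈ I, chart b (p t) = Complex.exp (-v t) • γ t := fun t ht =>
    hb.chart_coord (by rw [← hv t ht, ← Complex.exp_add, neg_add_cancel, Complex.exp_zero])
  have hlog : IsLog (fun t => Fintype.card ι * -v t) fun t => definingPoly L (chart b (p t)) :=
    ⟨by fun_prop, fun t ht => by
      beta_reduce
      rw [hchart t ht, isHomogeneous_definingPoly, hγ.2 t ht, mul_one, Complex.exp_nat_mul]⟩
  have hp : Curve (chartCompl L j b) p := ⟨by fun_prop, fun t ht =>
    hb.definingPoly_chart_ne_zero_iff.1 (ne_of_eq_of_ne (hlog.2 t ht).symm (Complex.exp_ne_zero _))⟩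
  have hexp : Complex.exp (v 0) = Complex.exp (v 1) := by
    rw [hv 0 unitInterval.zero_mem, hv 1 unitInterval.one_mem, h01]
  have hn : (Fintype.card ι : ℂ) ≠ 0 := NeZero.ne _
  have hzero := (hb.twistData hP).period_rescale_eq_zero hf hp
    (by simp only [p, Complex.exp_neg, hexp, h01]) hlog (by
      rw [← mul_sub, ← mul_assoc, div_mul_cancel₀ _ hn, Complex.exp_nat_mul, Complex.exp_sub,
        Complex.exp_neg, Complex.exp_neg, hexp, div_self (inv_ne_zero (Complex.exp_ne_zero _)),
        one_pow])
  rw [← hzero]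
  refine congrArg Multiplicative.toAdd (P.hol_congr hγ (isHomogeneous_definingPoly.curve_rescale
    continuous_chart hp.1 hlog).1 fun t ht => ?_)
  rw [rescale, hchart t ht, smul_smul, ← Complex.exp_add, mul_neg, neg_neg,
    mul_div_cancel_left₀ _ hn, add_neg_cancel, Complex.exp_zero, one_smul]

end Adapted
end Chart

/-! ### Points of the line at infinity -/

section Arrangement

variable {ι : Type*} {V : Type*} [NormedAddCommGroup V] [NormedSpace ℂ V]

/-- The linear forms `L` define pairwise distinct lines of the projective plane. -/
def DistinctLines (L : ι → V →L[ℂ] ℂ) : Prop :=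
  ∀ i j, i ≠ j → ∃ v, L j v = 0 ∧ L i v ≠ 0

/-- The number of lines of the arrangement through the point `v` of the projective plane. -/
noncomputable def pointMultiplicity (L : ι → V →L[ℂ] ℂ) (v : V) : ℕ :=
  Nat.card {i // L i v = 0}

variable {L : ι → V →L[ℂ] ℂ} {j : ι}

theorem linearIndependent_of_apply {f g : V →L[ℂ] ℂ} {v₀ v₁ v₂ : V} (hf₀ : f v₀ = 1)
    (hf₁ : f v₁ = 0) (hf₂ : f v₂ = 0) (hg₁ : g v₁ = 0) (hg₂ : g v₂ ≠ 0) (hv₁ : v₁ ≠ 0) :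
    LinearIndependent ℂ ![v₀, v₁, v₂] := by
  rw [Fintype.linearIndependent_iff]
  intro c hc
  simp only [Fin.sum_univ_three, Matrix.cons_val_zero, Matrix.cons_val_one, Matrix.cons_val] at hc
  have h0 : c 0 = 0 := by simpa [hf₀, hf₁, hf₂] using congrArg f hc
  have h2 : c 2 = 0 := by simpa [h0, hg₁, hg₂] using congrArg g hc
  have h1 : c 1 = 0 := by simpa [h0, h2, hv₁] using hc
  intro i
  fin_cases i <;> assumption

theorem DistinctLines.exists_adapted [Finite ι] [Nontrivial ι] (hL : DistinctLines L)
    (hV : Module.finrank ℂ V = 3) (j : ι) :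
    ∃ b : Module.Basis (Fin 3) ℂ V, Adapted L j b := by
  have : FiniteDimensional ℂ V := Module.finite_of_finrank_pos (by lia)
  obtain ⟨i, hij⟩ := exists_ne j
  obtain ⟨v₂, hv₂ : L j v₂ = 0, hne⟩ := Module.Dual.exists_forall_mem_ne_zero_of_forall_exists
    (K := ℂ) (LinearMap.ker (L j : V →ₗ[ℂ] ℂ)) (fun l : {l // l ≠ j} => (L l : V →ₗ[ℂ] ℂ))
    fun l => hL l j l.2
  obtain ⟨v, -, hv⟩ := hL j i hij.symm
  obtain ⟨v₁, hv₁, hv₁0⟩ := Submodule.exists_mem_ne_zero_of_ne_bot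
    (LinearMap.ker_ne_bot_of_finrank_lt
      (f := (L j : V →ₗ[ℂ] ℂ).prod (L i : V →ₗ[ℂ] ℂ)) (by simp [hV]))
  obtain ⟨hj₁, hi₁⟩ : L j v₁ = 0 ∧ L i v₁ = 0 := Prod.mk_eq_zero.1 hv₁
  have hj₀ : L j ((L j v)⁻¹ • v) = 1 := by simp [hv]
  let b := basisOfLinearIndependentOfCardEqFinrank
    (linearIndependent_of_apply hj₀ hj₁ hv₂ hi₁ (hne ⟨i, hij⟩) hv₁0) (by simp [hV])
  have hb : ⇑b = ![(L j v)⁻¹ • v, v₁, v₂] := coe_basisOfLinearIndependentOfCardEqFinrank _ _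
  exact ⟨b, by rwa [hb], by rwa [hb], by rwa [hb], fun l hl => by rw [hb]; exact hne ⟨l, hl⟩⟩

/-- The point at infinity, in the chart of `b`, of a line of the arrangement other than `j`. -/
noncomputable def pointAtInfinity (L : ι → V →L[ℂ] ℂ) (j : ι) (b : Module.Basis (Fin 3) ℂ V)
    (i : {i // i ≠ j}) : V :=
  b 1 + slope L j b i • b 2

theorem pointAtInfinity_ne_zero (b : Module.Basis (Fin 3) ℂ V) (i : {i // i ≠ j}) :
    pointAtInfinity L j b i ≠ 0 := fun h => by
  simpa [pointAtInfinity] using congrArg (b.coord 1) h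

namespace Adapted

variable {b : Module.Basis (Fin 3) ℂ V} (hb : Adapted L j b)
include hb

theorem intercept_ne (hL : DistinctLines L) {i k : {i // i ≠ j}} (hik : i ≠ k)
    (h : slope L j b i = slope L j b k) : intercept L j b i ≠ intercept L j b k := by
  intro h'
  obtain ⟨v, hk, hi⟩ := hL i k fun h => hik (Subtype.ext h)
  have hi2 := hb.apply_two_ne_zero i i.2
  have hk2 := hb.apply_two_ne_zero k k.2
  unfold slope at h
  unfold intercept at h'
  rw [div_eq_div_iff hi2 hk2] at h h'
  have hmul : L i v * L k (b 2) = L k v * L i (b 2) := by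
    rw [← b.sum_repr v, Fin.sum_univ_three]
    simp only [map_add, map_smul, smul_eq_mul]
    linear_combination -b.repr v 0 * h' - b.repr v 1 * h
  rw [hk, zero_mul] at hmul
  exact hi ((mul_eq_zero.1 hmul).resolve_right hk2)

theorem apply_pointAtInfinity_self (i : {i // i ≠ j}) : L j (pointAtInfinity L j b i) = 0 := by
  simp [pointAtInfinity, hb.apply_one, hb.apply_two]

theorem apply_pointAtInfinity_eq_zero_iff (i k : {i // i ≠ j}) :
    L k (pointAtInfinity L j b i) = 0 ↔ slope L j b k = slope L j b i := by
  have hk := hb.apply_two_ne_zero k k.2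
  have hmul : L k (pointAtInfinity L j b i) = L k (b 2) * (slope L j b i - slope L j b k) := by
    simp only [pointAtInfinity, map_add, map_smul, smul_eq_mul, slope]
    field_simp
    ring
  rw [hmul, mul_eq_zero, or_iff_right hk, sub_eq_zero, eq_comm]

theorem three_le_pointMultiplicity [Finite ι] {i k : {i // i ≠ j}} (hki : k ≠ i)
    (h : slope L j b k = slope L j b i) : 3 ≤ pointMultiplicity L (pointAtInfinity L j b i) := by
  classical
  have hcard : ({j, k.1, i.1} : Finset ι).card = 3 :=
    Finset.card_eq_three.2 ⟨j, k, i, k.2.symm, i.2.symm, fun h => hki (Subtype.ext h), rfl⟩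
  rw [← hcard, pointMultiplicity, ← Nat.card_eq_finsetCard]
  refine Nat.card_mono (toFinite {l | L l (pointAtInfinity L j b i) = 0}) fun l hl => ?_
  have hl : l = j ∨ l = k ∨ l = i := by simpa using hl
  rcases hl with rfl | rfl | rfl
  · exact hb.apply_pointAtInfinity_self i
  · exact (hb.apply_pointAtInfinity_eq_zero_iff i k).2 h
  · exact (hb.apply_pointAtInfinity_eq_zero_iff i i).2 rfl

theorem card_slope_ne_add_pointMultiplicity [Fintype ι] [DecidableEq ι] (i : {i // i ≠ j}) :
    ({k | slope L j b k ≠ slope L j b i} : Finset {i // i ≠ j}).card +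
      pointMultiplicity L (pointAtInfinity L j b i) = Fintype.card ι := by
  have hmap : ({k | slope L j b k ≠ slope L j b i} : Finset {i // i ≠ j}).map
      (Function.Embedding.subtype _) = ({k | L k (pointAtInfinity L j b i) ≠ 0} : Finset ι) := by
    ext k
    simp only [ne_eq, ← hb.apply_pointAtInfinity_eq_zero_iff i, Finset.mem_map,
      Finset.mem_filter_univ, Function.Embedding.subtype_apply]
    constructor
    · rintro ⟨k, hk, rfl⟩
      exact hk
    · exact fun hk => ⟨⟨k, fun h => hk (h ▸ hb.apply_pointAtInfinity_self i)⟩, hk, rfl⟩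
  rw [pointMultiplicity, Nat.card_eq_fintype_card, Fintype.card_subtype,
    ← Finset.card_map (Function.Embedding.subtype _), hmap, add_comm,
    Finset.card_filter_add_card_filter_not, Finset.card_univ]

end Adapted

theorem exp_div_mul_ne_one {k m n : ℕ} [NeZero n] (h : ¬ n ∣ k * m) :
    Complex.exp (k / n * (2 * Real.pi * Complex.I * m)) ≠ 1 := by
  have hn : (n : ℂ) ≠ 0 := NeZero.ne _
  intro he
  obtain ⟨d, hd⟩ := Complex.exp_eq_one_iff.1 he
  have hkm : ((k * m : ℕ) : ℂ) = n * d := by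
    field_simp at hd
    exact_mod_cast hd
  exact h (Int.natCast_dvd_natCast.1 ⟨d, by exact_mod_cast hkm⟩)

variable [Fintype ι] [Nontrivial ι]
  {P : Transport (milnorFiber (definingPoly L)) (Multiplicative ℂ)}

theorem DistinctLines.isExact_of_isEigen (hL : DistinctLines L)
    (hV : Module.finrank ℂ V = 3) {k : ℕ} (hP : P.IsEigen (Fintype.card ι) k)
    (hk : ¬ Fintype.card ι ∣ k)
    (hj : ∀ v, v ≠ 0 → L j v = 0 → 3 ≤ pointMultiplicity L v →
      ¬ Fintype.card ι ∣ k * pointMultiplicity L v) : P.IsExact := by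
  classical
  obtain ⟨b, hb⟩ := hL.exists_adapted hV j
  have hcompl : ∀ {c m : ℕ}, c + m = Fintype.card ι → ¬ Fintype.card ι ∣ k * m →
      Complex.exp (k / Fintype.card ι * (2 * Real.pi * Complex.I * c)) ≠ 1 := fun hcm hm =>
    exp_div_mul_ne_one fun hc => hm ((Nat.dvd_add_right hc).1
      (by rw [← mul_add, hcm]; exact dvd_mul_left _ _))
  have hcard : Fintype.card {i // i ≠ j} + 1 = Fintype.card ι := by
    rw [Fintype.card_subtype_compl, Fintype.card_subtype_eq]
    exact Nat.sub_add_cancel Fintype.card_pos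
  have hcls : ∀ i, (∀ l, slope L j b l = slope L j b i → l = i) ∨
      Complex.exp (k / Fintype.card ι * (2 * Real.pi * Complex.I *
        ({l | slope L j b l ≠ slope L j b i} : Finset {i // i ≠ j}).card)) ≠ 1 := fun i => by
    refine or_iff_not_imp_left.2 fun h => ?_
    push Not at h
    obtain ⟨l, hl, hli⟩ := h
    exact hcompl (hb.card_slope_ne_add_pointMultiplicity i) (hj _ (pointAtInfinity_ne_zero b i)
      (hb.apply_pointAtInfinity_self i) (hb.three_le_pointMultiplicity hli hl))
  obtain ⟨f, hf⟩ := exists_flat_of_exponent (hb.affineOfExponent_transport hP)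
    (hcompl hcard (by rwa [mul_one])) hcls fun i k => hb.intercept_ne hL
  exact hb.isExact_of_flat hP hf

theorem DistinctLines.exists_curves_isExact (hL : DistinctLines L)
    (hV : Module.finrank ℂ V = 3) (j : ι) :
    ∃ y : {i // i ≠ j} → ℝ → V,
      ∀ P : Transport (milnorFiber (definingPoly L)) (Multiplicative ℂ),
        P.IsEigen (Fintype.card ι) 0 → (∀ i, P.period (y i) = 0) → P.IsExact := by
  obtain ⟨b, hb⟩ := hL.exists_adapted hV j
  obtain ⟨c, hc, hflat⟩ := exists_meridians fun i k => hb.intercept_ne (i := i) (k := k) hL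
  choose u hu using fun i => exists_isLog (g := fun t => definingPoly L (chart b (c i t)))
    (continuous_definingPoly.comp (continuous_chart.comp (hc i).1.1))
    fun t ht => hb.definingPoly_chart_ne_zero_iff.2 ((hc i).1.2 t ht)
  refine ⟨fun i => rescale (Fintype.card ι) (chart b) (u i) (c i), fun P hP h0 => ?_⟩
  obtain ⟨f, hf⟩ := hflat (hb.twistData hP).transport
    (fun γ hγ c => by simpa using (hb.twistData hP).transport_hol_eq_add hγ c)
    fun i => by rw [TwistData.transport_hol_apply _ (hc i).1.1 (hu i), h0]; simp
  exact hb.isExact_of_flat hP hf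

end Arrangement

/-! ### The first Betti number -/

section Homology

variable {E : Type*} [TopologicalSpace E] {X : Set E} (z : X)

/-- The first homology group of `X`, assumed path-connected, with complex coefficients. -/
abbrev H₁ : Type _ :=
  ℂ ⊗[ℤ] Additive (Abelianization (FundamentalGroup X z))

/-- The homology class of a curve. -/
noncomputable def homologyClass (γ : ℝ → E) : H₁ z :=
  1 ⊗ₜ Additive.ofMul ((univTransport z).hol γ)

/-- The transport whose periods are the values of `φ` on homology classes. -/
noncomputable def dualTransport (φ : Module.Dual ℂ (H₁ z)) : Transport X (Multiplicative ℂ) :=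
  (univTransport z).map
    { toFun := fun g => Multiplicative.ofAdd (φ (1 ⊗ₜ Additive.ofMul g))
      map_one' := by simp
      map_mul' := fun g h => by simp [TensorProduct.tmul_add] }

theorem period_dualTransport (φ : Module.Dual ℂ (H₁ z)) (γ : ℝ → E) :
    (dualTransport z φ).period γ = φ (homologyClass z γ) :=
  rfl

/-- The linear form on homology given by the periods of `T`. -/
noncomputable def Transport.toDual (T : Transport X (Multiplicative ℂ)) : Module.Dual ℂ (H₁ z) :=
  LinearMap.liftBaseChange ℂ
    (Abelianization.lift (T.monodromy z)).toAdditiveLeft.toIntLinearMap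

theorem Transport.toDual_homologyClass (T : Transport X (Multiplicative ℂ)) {γ : ℝ → E}
    (hγ : Curve X γ) (h0 : γ 0 = z) (h1 : γ 1 = z) :
    T.toDual z (homologyClass z γ) = T.period γ := by
  rw [Transport.toDual, homologyClass, LinearMap.liftBaseChange_tmul, one_smul]
  exact congrArg Multiplicative.toAdd (T.lift_monodromy_univTransport z hγ h0 h1)

theorem eq_zero_of_isExact_dualTransport {φ : Module.Dual ℂ (H₁ z)}
    (hφ : (dualTransport z φ).IsExact) : φ = 0 := by
  ext g
  obtain ⟨γ, hγ, h0, h1, hg⟩ := exists_loop_univTransport_hol_eq z g.toMul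
  have h := hφ γ hγ (h0.trans h1.symm)
  rwa [period_dualTransport, homologyClass, hg] at h

end Homology

section Upper

variable {V : Type*} [AddCommGroup V] [Module ℂ V] [TopologicalSpace V] [ContinuousConstSMul ℂ V]
  {X : Set V} {n : ℕ} [NeZero n] (z : X)

theorem rank_le_of_isExact_of_isEigen (hX : StableUnderRoots n X) {κ : Type*} [Fintype κ]
    (y : κ → ℝ → V)
    (hy : ∀ P : Transport X (Multiplicative ℂ),
      P.IsEigen n 0 → (∀ i, P.period (y i) = 0) → P.IsExact)
    (hk : ∀ k, ¬ n ∣ k → ∀ P : Transport X (Multiplicative ℂ), P.IsEigen n k → P.IsExact) :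
    Module.rank ℂ (H₁ z) ≤ Fintype.card κ := by
  let Φ : Module.Dual ℂ (H₁ z) →ₗ[ℂ] κ → ℂ :=
    { toFun := fun φ i => ((dualTransport z φ).eigenpart hX 0).period (y i)
      map_add' := fun φ ψ => funext fun i => by
        simp [Transport.period_eigenpart, period_dualTransport, Finset.sum_add_distrib, mul_add]
      map_smul' := fun c φ => funext fun i => by
        simp [Transport.period_eigenpart, period_dualTransport, ← Finset.mul_sum, mul_left_comm] }
  have hΦ : Function.Injective Φ := (injective_iff_map_eq_zero Φ).2 fun φ hφ => by
    refine eq_zero_of_isExact_dualTransport z fun γ hγ h01 => ?_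
    rw [← Transport.sum_period_eigenpart (hX := hX)]
    refine Finset.sum_eq_zero fun k hkn => ?_
    have heigen := (dualTransport z φ).isEigen_eigenpart (hX := hX) k
    rcases Nat.eq_zero_or_pos k with rfl | hk0
    · exact hy _ heigen (congrFun hφ) γ hγ h01
    · exact hk k (Nat.not_dvd_of_pos_of_lt hk0 (Finset.mem_range.1 hkn)) _ heigen γ hγ h01
  have : Module.Finite ℂ (Module.Dual ℂ (H₁ z)) := FiniteDimensional.of_injective Φ hΦ
  have : Module.Finite ℂ (H₁ z) := (Module.finite_dual_iff ℂ).1 this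
  have hfinrank := LinearMap.finrank_le_finrank_of_injective hΦ
  rw [Subspace.dual_finrank_eq, Module.finrank_fintype_fun_eq_card] at hfinrank
  rw [← Module.finrank_eq_rank]
  exact_mod_cast hfinrank

end Upper

/-- The matrix `n • 1 - J`, where all entries of `J` are one, is invertible. -/
theorem linearIndependent_of_dual_apply {M κ : Type*} [AddCommGroup M] [Module ℂ M] [Fintype κ]
    [DecidableEq κ] {x : κ → M} {ψ : κ → Module.Dual ℂ M} {c n : ℂ} (hc : c ≠ 0) (hn : n ≠ 0)
    (hκ : n ≠ Fintype.card κ) (h : ∀ i k, ψ k (x i) = c * ((if k = i then n else 0) - 1)) :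
    LinearIndependent ℂ x := by
  rw [Fintype.linearIndependent_iff]
  intro g hg
  have hrow : ∀ k, n * g k = ∑ i, g i := fun k => by
    have hk : ∑ i, g i * (c * ((if k = i then n else 0) - 1)) = 0 := by
      simpa [h] using congrArg (ψ k) hg
    have hck : c * (n * g k - ∑ i, g i) = 0 := by
      rw [← hk, mul_sub, Finset.mul_sum]
      simp [mul_sub, Finset.sum_sub_distrib, mul_comm, mul_left_comm]
    exact sub_eq_zero.1 ((mul_eq_zero.1 hck).resolve_left hc)
  have hsum : (n - Fintype.card κ) * ∑ i, g i = 0 := by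
    rw [sub_mul, Finset.mul_sum, Finset.sum_congr rfl fun k _ => hrow k]
    simp
  intro k
  have hk := hrow k
  rw [(mul_eq_zero.1 hsum).resolve_left (sub_ne_zero.2 hκ)] at hk
  exact (mul_eq_zero.1 hk).resolve_left hn

/-! ### Loops in the Milnor fibre -/

section Loops

theorem turn_natCast (n : ℕ) : turn n = 1 := by
  rw [turn, Complex.ofReal_natCast, mul_comm]
  exact Complex.exp_nat_mul_two_pi_mul_I n

theorem winds_mul_turn {ε : ℝ} (hε : 0 < ε) (n : ℕ) : Winds (fun t => ε * turn (t * n)) n := by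
  have h := Winds.turn_mul_add (z := ε) (h := fun _ => 0) continuous_const
    (fun _ => by simpa using hε.ne') rfl n
  simpa only [add_zero, mul_comm] using h

theorem winds_add_mul_turn {ε : ℝ} (hε : 0 < ε) {z : ℂ} (hz : ε < ‖z‖) (n : ℕ) :
    Winds (fun t => z + ε * turn (t * n)) 0 := by
  have h := Winds.turn_mul_add (z := z) (h := fun t => ε * turn (t * n)) (by fun_prop)
    (fun t => by rwa [norm_mul_turn hε]) (by simp [turn_natCast]) 0
  simpa only [mul_zero, turn_zero, one_mul] using h

theorem Transport.hol_concat_concat_reverse {E G : Type*} [TopologicalSpace E] [CommGroup G]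
    {X : Set E} (T : Transport X G) {γ δ : ℝ → E} (hγ : Curve X γ) (hδ : Curve X δ)
    (h0 : γ 1 = δ 0) (h1 : δ 1 = γ 1) :
    T.hol (concat (concat γ δ) fun t => γ (1 - t)) = T.hol δ := by
  rw [T.hol_concat (hγ.concat hδ h0) hγ.reverse (by simpa using h1), T.hol_concat hγ hδ h0,
    T.hol_reverse hγ, mul_inv_cancel_comm]

open Classical in
theorem exists_loop_winds {ι : Type*} [Finite ι] {s : ι → ℂ} (hs : Function.Injective s) {x : ℂ}
    (hx : x ∉ range s) (i : ι) (n : ℕ) :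
    ∃ r : ℝ → ℂ, Continuous r ∧ r 0 = x ∧ r 1 = x ∧
      ∀ k, Winds (fun t => r t - s k) (if k = i then n else 0) := by
  obtain ⟨ε, hε, hball⟩ := exists_isolating_radius (finite_range s) (s i)
  have hcirc := add_mul_turn_notMem hε hball
  obtain ⟨ρ, hρ, hρ0, hρ1⟩ := exists_curve_compl (finite_range s).countable hx
    (by simpa using hcirc 0)
  let δ : ℝ → ℂ := fun t => s i + ε * turn (t * n)
  have hδ : Curve (range s)ᶜ δ := ⟨by fun_prop, fun t _ => hcirc _⟩
  have h0 : ρ 1 = δ 0 := by simp [δ, hρ1]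
  have h1 : δ 1 = ρ 1 := by simp [δ, hρ1, turn_natCast]
  have hδwinds : ∀ k, Winds (fun t => δ t - s k) (if k = i then n else 0) := fun k => by
    split_ifs with hk
    · simpa [δ, hk] using winds_mul_turn hε n
    · have hfar : ε < ‖s i - s k‖ := by
        by_contra! hle
        exact hk (hs (hball ⟨(dist_eq_norm' _ _).trans_le hle, mem_range_self k⟩))
      simpa only [δ, add_sub_right_comm] using winds_add_mul_turn hε hfar n
  let r := concat (concat ρ δ) fun t => ρ (1 - t)
  have hr : Curve (range s)ᶜ r := (hρ.concat hδ h0).concat hρ.reverse (by simpa using h1)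
  have hsub : ∀ k, Continuous fun z => z - s k := fun k => by fun_prop
  have hne : ∀ k, ∀ z ∈ (range s)ᶜ, z - s k ≠ 0 := fun k z hz h =>
    hz ⟨k, (sub_eq_zero.1 h).symm⟩
  refine ⟨r, hr.1, by simp [r, hρ0], by simp [r, hρ0], fun k =>
    ⟨⟨(hsub k).comp hr.1, fun t ht => hne k _ (hr.2 t ht)⟩, (hδwinds k).2 ▸ ?_⟩⟩
  exact congrArg Multiplicative.toAdd
    ((logTransport (hsub k) (hne k)).hol_concat_concat_reverse hρ hδ h0 h1)

variable {ι : Type*} {V : Type*} [NormedAddCommGroup V] [NormedSpace ℂ V]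
  {L : ι → V →L[ℂ] ℂ}

theorem DistinctLines.exists_direction [Finite ι] (hL : DistinctLines L) {z : V}
    (hz : ∀ i, L i z ≠ 0) :
    ∃ d, (∀ i, L i d ≠ 0) ∧ Function.Injective fun i => -L i z / L i d := by
  let f : ι ⊕ {p : ι × ι // p.1 ≠ p.2} → Module.Dual ℂ V := Sum.elim (fun i => L i)
    fun p => L p.1.1 z • (L p.1.2 : V →ₗ[ℂ] ℂ) - L p.1.2 z • (L p.1.1 : V →ₗ[ℂ] ℂ)
  have hf : ∀ x, ∃ v, f x v ≠ 0 := by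
    rintro (i | ⟨⟨i, k⟩, hik⟩)
    · exact ⟨z, hz i⟩
    · obtain ⟨v, hv, hv'⟩ := hL k i hik.symm
      exact ⟨v, by simp [f, hv, hv', hz i]⟩
  obtain ⟨d, hd⟩ := Module.Dual.exists_forall_ne_zero_of_forall_exists f hf
  have hLd : ∀ i, L i d ≠ 0 := fun i => hd (Sum.inl i)
  refine ⟨d, hLd, fun i k h => by_contra fun hik => hd (Sum.inr ⟨(i, k), hik⟩) ?_⟩
  rw [div_eq_div_iff (hLd i) (hLd k), neg_mul, neg_mul, neg_inj] at h
  simp [f, h]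

variable [Fintype ι] [Nonempty ι]

open Classical in
theorem DistinctLines.exists_loop_logVar (hL : DistinctLines L) {z : V}
    (hz : z ∈ milnorFiber (definingPoly L)) (i : ι) :
    ∃ γ, Curve (milnorFiber (definingPoly L)) γ ∧ γ 0 = z ∧ γ 1 = z ∧ ∀ k,
      logVar (fun t => L k (γ t)) =
        2 * Real.pi * Complex.I * ((if k = i then (Fintype.card ι : ℂ) else 0) - 1) := by
  have hLz := apply_ne_zero_of_definingPoly_ne_zero (hz.trans_ne one_ne_zero)
  obtain ⟨d, hd, hinj⟩ := hL.exists_direction hLz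
  obtain ⟨r, hrc, hr0, hr1, hr⟩ := exists_loop_winds hinj (x := 0)
    (by simp [hLz, hd]) i (Fintype.card ι)
  let w : ℝ → V := fun t => z + r t • d
  have hLw : ∀ k, Winds (fun t => L k (w t)) (if k = i then Fintype.card ι else 0) := fun k => by
    convert (hr k).const_mul (hd k) using 2 with t
    have := hd k
    simp only [w, map_add, map_smul, smul_eq_mul]
    field_simp
    ring
  have hqw : Winds (fun t => definingPoly L (w t)) (Fintype.card ι) := by
    have h := Winds.prod fun k (_ : k ∈ Finset.univ) => hLw k
    simpa only [definingPoly, Finset.sum_ite_eq', Finset.mem_univ, if_true] using h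
  obtain ⟨u, hu, hu0⟩ := exists_isLog_of_apply_zero hqw.1.1 hqw.1.2 
    (by simpa [w, hr0, milnorFiber] using hz)
  have hu1 : u 1 = 2 * Real.pi * Complex.I * Fintype.card ι := by
    simpa [hu.logVar_eq, hu0] using hqw.2
  have hn : (Fintype.card ι : ℂ) ≠ 0 := Nat.cast_ne_zero.2 Fintype.card_ne_zero
  have huc := hu.1
  have hlog : IsLog (fun t => -u t / Fintype.card ι)
      fun t => Complex.exp (-u t / Fintype.card ι) := ⟨by fun_prop, fun _ _ => rfl⟩
  refine ⟨rescale (Fintype.card ι) id u w,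
    isHomogeneous_definingPoly.curve_rescale continuous_id (by fun_prop) hu,
    by simp [rescale, w, hu0, hr0], ?_, fun k => ?_⟩
  · simp [rescale, w, hu1, hr1, neg_div, mul_div_cancel_right₀ _ hn, Complex.exp_neg]
  · simp only [rescale, id, map_smul, smul_eq_mul]
    rw [logVar_mul ⟨hlog.1.cexp, fun _ _ => Complex.exp_ne_zero _⟩ (hLw k).1, hlog.logVar_eq,
      (hLw k).2, hu0, hu1]
    split_ifs <;> push_cast <;> field_simp <;> ring

theorem DistinctLines.card_sub_one_le_rank (hL : DistinctLines L)
    (z : milnorFiber (definingPoly L)) :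
    ((Fintype.card ι - 1 : ℕ) : Cardinal) ≤ Module.rank ℂ (H₁ z) := by
  classical
  choose γ hγ h0 h1 hlog using fun i => hL.exists_loop_logVar z.2 i
  let ψ : ι → Module.Dual ℂ (H₁ z) := fun k =>
    (logTransport (L k).continuous fun y hy =>
      apply_ne_zero_of_definingPoly_ne_zero (hy.trans_ne one_ne_zero) k).toDual z
  have hψ : ∀ i k, ψ k (homologyClass z (γ i)) =
      2 * Real.pi * Complex.I * ((if k = i then (Fintype.card ι : ℂ) else 0) - 1) := fun i k =>
    (Transport.toDual_homologyClass z _ (hγ i) (h0 i) (h1 i)).trans (hlog i k)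
  obtain ⟨j⟩ := ‹Nonempty ι›
  have hcard : Fintype.card {i // i ≠ j} = Fintype.card ι - 1 := by
    rw [Fintype.card_subtype_compl, Fintype.card_subtype_eq]
  have hlt : Fintype.card ι ≠ Fintype.card {i // i ≠ j} := 
    (Fintype.card_subtype_lt (x := j) (by simp)).ne'
  have hli := linearIndependent_of_dual_apply (x := fun i : {i // i ≠ j} => homologyClass z (γ i))
    (ψ := fun k => ψ k) Complex.two_pi_I_ne_zero
    (Nat.cast_ne_zero.2 Fintype.card_ne_zero) (Nat.cast_injective.ne hlt)
    fun i k => by simp only [hψ, Subtype.ext_iff]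
  have hrank := hli.cardinal_lift_le_rank
  rw [Cardinal.mk_fintype, hcard] at hrank
  simpa using hrank

end Loops

/-- The linear form `z ↦ a · z`. -/
noncomputable def dotForm (a : Fin 3 → ℂ) : (Fin 3 → ℂ) →L[ℂ] ℂ :=
  ∑ k, a k • ContinuousLinearMap.proj k

theorem dotForm_apply (a z : Fin 3 → ℂ) : dotForm a z = ∑ k, a k * z k := by
  simp [dotForm]

theorem distinctLines_dotForm {ι : Type*} {a : ι → Fin 3 → ℂ}
    (ha : ∀ i j, i ≠ j → LinearIndependent ℂ ![a i, a j]) :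
    DistinctLines fun i => dotForm (a i) := fun i j hij => by
  obtain ⟨c, hc⟩ := Function.ne_iff.1 (crossProduct_ne_zero_iff_linearIndependent.2 (ha i j hij))
  refine ⟨crossProduct (a j) (Pi.single c 1), ?_, ?_⟩
  · rw [dotForm_apply]
    exact dot_self_cross (a j) _
  · rw [dotForm_apply]
    change a i ⬝ᵥ _ ≠ 0
    rwa [← triple_product_permutation, single_one_dotProduct]

end Milnor

open Milnor in
theorem milnor_fiber_betti_twelve_lines_general {ι : Type*} [Fintype ι] [Nontrivial ι]
    {V : Type*} [NormedAddCommGroup V] [NormedSpace ℂ V] (hV : Module.finrank ℂ V = 3)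
    {L : ι → V →L[ℂ] ℂ} (hL : DistinctLines L)
    (hj : ∀ k, ¬ Fintype.card ι ∣ k → ∃ j, ∀ v, v ≠ 0 → L j v = 0 → 3 ≤ pointMultiplicity L v →
      ¬ Fintype.card ι ∣ k * pointMultiplicity L v)
    (z : milnorFiber (definingPoly L)) :
    Module.rank ℂ (H₁ z) = (Fintype.card ι - 1 : ℕ) := by
  classical
  refine le_antisymm ?_ (hL.card_sub_one_le_rank z)
  obtain ⟨j⟩ := (inferInstance : Nonempty ι)
  obtain ⟨y, hy⟩ := hL.exists_curves_isExact hV j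
  have hle := rank_le_of_isExact_of_isEigen z isHomogeneous_definingPoly.stableUnderRoots y hy
    fun k hk P hP => by
      obtain ⟨i, hi⟩ := hj k hk
      exact hL.isExact_of_isEigen hV hP hk hi
  rwa [Fintype.card_subtype_compl, Fintype.card_subtype_eq] at hle

/-- For a central arrangement of `12` planes in `ℂ³` such that one line
only contains multiple points of multiplicity `2` and `3` (with at least one of
multiplicity `3`) and another line only contains multiple points of multiplicity `2`
and `4` (with at least one of multiplicity `4`), the first Betti number of the Milnor
fiber with complex coefficients equals `11`. -/
theorem milnor_fiber_betti_twelve_lines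
    (a : Fin 12 → Fin 3 → ℂ)
    (ha : ∀ i, a i ≠ 0)
    (hind : ∀ i j : Fin 12, i ≠ j → LinearIndependent ℂ ![a i, a j])
    (ℓ : Fin 12 → (Fin 3 → ℂ) → ℂ)
    (hℓ : ∀ i z, ℓ i z = ∑ k, a i k * z k)
    (m : (Fin 3 → ℂ) → ℕ)
    (hm : ∀ v, m v = Nat.card {i : Fin 12 // ℓ i v = 0})
    (F : Set (Fin 3 → ℂ)) (hF : F = {z | ∏ i, ℓ i z = 1})
    (z₀ : F)
    (j₃ : Fin 12)
    (hj₃le : ∀ v : Fin 3 → ℂ, v ≠ 0 → ℓ j₃ v = 0 → m v ≤ 3)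
    (hj₃ex : ∃ v : Fin 3 → ℂ, v ≠ 0 ∧ ℓ j₃ v = 0 ∧ m v = 3)
    (j₄ : Fin 12)
    (hj₄mem : ∀ v : Fin 3 → ℂ, v ≠ 0 → ℓ j₄ v = 0 → m v = 1 ∨ m v = 2 ∨ m v = 4)
    (hj₄ex : ∃ v : Fin 3 → ℂ, v ≠ 0 ∧ ℓ j₄ v = 0 ∧ m v = 4) :
    Module.rank ℂ (ℂ ⊗[ℤ] Additive (Abelianization (FundamentalGroup F z₀))) = 11 := by
  obtain rfl : ℓ = fun i z => Milnor.dotForm (a i) z := by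
    funext i z
    rw [hℓ, Milnor.dotForm_apply]
  obtain rfl : m = Milnor.pointMultiplicity fun i => Milnor.dotForm (a i) := funext hm
  subst hF
  refine milnor_fiber_betti_twelve_lines_general (by simp) (Milnor.distinctLines_dotForm hind)
    (fun k hk => ?_) z₀
  rw [Fintype.card_fin] at hk ⊢
  by_cases h4 : 4 ∣ k
  · refine ⟨j₄, fun v hv hjv h3 => ?_⟩
    rcases hj₄mem v hv hjv with h | h | h <;> rw [h] at h3 ⊢ <;> omega
  · refine ⟨j₃, fun v hv hjv h3 => ?_⟩
    rw [(hj₃le v hv hjv).antisymm h3]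
    omega
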